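/- arXiv:quant-ph/0010101 — 7 statements merged into one kernel-verified Lean document; each statement's English description precedes it below -/
import Mathlib

section
/- Let n ≥ 2 and let k ≥ 1 be odd. Then every G-invariant homogeneous degree-n polynomial function on tensor states in (ℂ^n)^{⊗k} is identically zero. -/
/-!
Let `c` be the coefficient of a monomial `d` in an invariant `Q` of degree `n`, the monomial being
a multiset of `n` multi-indices.

* Invariance under the diagonal torus in slot `m` forces each value `i` to occur equally often, so
  exactly once, as the `m`-th entry of the multi-indices in `d` (`fiber_sum_eq_one`). Hence two
  distinct multi-indices `a`, `b` of `d` differ in every slot, and no other multi-index of `d`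
  shares an entry with either of them.
* Choose `ζ` with `ζ ^ n = -1`. In each slot `m` let act `ζ` times the permutation matrix of the
  transposition `(a m  b m)`, which has determinant `1`. The scalars multiply `Q` by
  `ζ ^ (k * n) = (-1) ^ k = -1`, so permuting the coordinates by these transpositions turns `Q`
  into `-Q` (`rename_swap`).
* That permutation exchanges `a` and `b` and fixes the other multi-indices of `d`, so it fixes `d`.
  Therefore `c = -c`, that is, `c = 0`.
-/

open MvPolynomial

/-- Action of `SL(n,ℂ)^k` on tensor states in `(ℂ^n)^{⊗k}`, the `m`-th factor acting on
the `m`-th tensor slot. -/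
noncomputable def actTensor {n k : ℕ} (g : Fin k → Matrix.SpecialLinearGroup (Fin n) ℂ)
    (u : (Fin k → Fin n) → ℂ) : (Fin k → Fin n) → ℂ :=
  fun p => ∑ q : Fin k → Fin n, (∏ m, ((g m : Matrix (Fin n) (Fin n) ℂ) (p m) (q m))) * u q

/-- Action of matrices having in row `i` the single possibly nonzero entry `f m i`, in column
`s m i`. Both the torus elements and the scaled transpositions have this shape. -/
lemma actTensor_monomial {n k : ℕ} (g : Fin k → Matrix.SpecialLinearGroup (Fin n) ℂ)
    (f : Fin k → Fin n → ℂ) (s : Fin k → Fin n → Fin n)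
    (hg : ∀ m i j, (g m : Matrix (Fin n) (Fin n) ℂ) i j = if s m i = j then f m i else 0)
    (u : (Fin k → Fin n) → ℂ) (p : Fin k → Fin n) :
    actTensor g u p = (∏ m, f m (p m)) * u (fun m => s m (p m)) := by
  unfold actTensor
  rw [Finset.sum_eq_single (fun m => s m (p m))]
  · simp [hg]
  · intro q _ hq
    obtain ⟨m, hm⟩ := Function.ne_iff.mp hq
    rw [Finset.prod_eq_zero (Finset.mem_univ m), zero_mul]
    rw [hg, if_neg (Ne.symm hm)]
  · simp

lemma coeff_aeval_scale {σ : Type*} (f : σ → ℂ) (Q : MvPolynomial σ ℂ) (d : σ →₀ ℕ) :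
    coeff d (aeval (fun p => C (f p) * X p : σ → MvPolynomial σ ℂ) Q)
      = (d.prod fun p e => f p ^ e) * coeff d Q := by
  classical
  induction Q using MvPolynomial.induction_on' with
  | monomial e a =>
    have h : aeval (fun p => C (f p) * X p : σ → MvPolynomial σ ℂ) (monomial e a)
        = monomial e ((e.prod fun p e => f p ^ e) * a) := by
      rw [aeval_monomial, monomial_eq, algebraMap_eq]
      simp only [mul_pow, Finsupp.prod, Finset.prod_mul_distrib, map_mul, map_prod, map_pow]
      ring
    rw [h, coeff_monomial, coeff_monomial]
    split_ifs with hd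
    · rw [hd]
    · simp
  | add p q hp hq => rw [map_add, coeff_add, coeff_add, hp, hq, mul_add]

section Invariant

variable {n k : ℕ} {Q : MvPolynomial (Fin k → Fin n) ℂ}

/-- Torus invariance: in each slot, any two values occur equally often in a monomial of `Q`.
The torus element used is `diag(…, 2, …, 1/2, …)`, with the two entries in positions `i`, `j`. -/
lemma fiber_sum_eq
    (hinv : ∀ (g : Fin k → Matrix.SpecialLinearGroup (Fin n) ℂ) (u : (Fin k → Fin n) → ℂ),
      MvPolynomial.eval (actTensor g u) Q = MvPolynomial.eval u Q)
    {d : (Fin k → Fin n) →₀ ℕ} (hd : coeff d Q ≠ 0) (m : Fin k) (i j : Fin n) :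
    ∑ p with p m = i, d p = ∑ p with p m = j, d p := by
  classical
  let h : Fin n → ℂ := fun l => (if l = i then 2 else 1) * (if l = j then 2⁻¹ else 1)
  have hdet : (Matrix.diagonal h).det = 1 := by
    simp only [h, Matrix.det_diagonal, Finset.prod_mul_distrib]
    simp
  let g : Fin k → Matrix.SpecialLinearGroup (Fin n) ℂ :=
    fun m' => if m' = m then ⟨Matrix.diagonal h, hdet⟩ else 1
  have hact (u : (Fin k → Fin n) → ℂ) (p : Fin k → Fin n) :
      actTensor g u p = h (p m) * u p := by
    rw [actTensor_monomial g (fun m' l => if m' = m then h l else 1) (fun _ l => l)]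
    · simp
    · intro m' a b
      by_cases hm : m' = m
      · simp [g, hm, Matrix.diagonal_apply]
      · simp [g, hm, Matrix.one_apply]
  have hQ : aeval (fun p => C (h (p m)) * X p : _ → MvPolynomial (Fin k → Fin n) ℂ) Q = Q := by
    refine MvPolynomial.funext fun u => ?_
    rw [← hinv g u, aeval_eq_bind₁, eval, eval₂Hom_bind₁]
    congr 2
    funext p
    simp [hact]
  have hc := coeff_aeval_scale (fun p => h (p m)) Q d
  rw [hQ] at hc
  have h1 : (d.prod fun p e => h (p m) ^ e) = 1 := mul_right_cancel₀ hd (by rw [← hc, one_mul])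
  rw [Finsupp.prod_fintype _ _ (by simp)] at h1
  have h2 : ∏ p : Fin k → Fin n, h (p m) ^ d p
      = 2 ^ (∑ p with p m = i, d p) * 2⁻¹ ^ (∑ p with p m = j, d p) := by
    simp only [h, mul_pow, Finset.prod_mul_distrib, ite_pow, one_pow, ← Finset.prod_filter,
      Finset.prod_pow_eq_pow_sum]
  rw [h2, inv_pow, mul_inv_eq_one₀ (pow_ne_zero _ two_ne_zero)] at h1
  have h3 : (2 : ℕ) ^ (∑ p with p m = i, d p) = 2 ^ (∑ p with p m = j, d p) := by
    exact_mod_cast h1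
  exact Nat.pow_right_injective le_rfl h3

lemma fiber_sum_eq_one (hn : 2 ≤ n) (hhom : Q.IsHomogeneous n)
    (hinv : ∀ (g : Fin k → Matrix.SpecialLinearGroup (Fin n) ℂ) (u : (Fin k → Fin n) → ℂ),
      MvPolynomial.eval (actTensor g u) Q = MvPolynomial.eval u Q)
    {d : (Fin k → Fin n) →₀ ℕ} (hd : coeff d Q ≠ 0) (m : Fin k) (i : Fin n) :
    ∑ p with p m = i, d p = 1 := by
  classical
  have hdeg : ∑ p, d p = n := by
    rw [← Finsupp.degree_eq_sum]
    have := hhom hd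
    rwa [Pi.one_def, ← Finsupp.degree_eq_weight_one] at this
  have hfib : ∑ l : Fin n, ∑ p with p m = l, d p = n := by
    rw [Finset.sum_fiberwise, hdeg]
  rw [Finset.sum_congr rfl fun l _ => fiber_sum_eq hinv hd m l i] at hfib
  simp only [Finset.sum_const, Finset.card_univ, Fintype.card_fin, smul_eq_mul] at hfib
  exact Nat.eq_of_mul_eq_mul_left (by omega : 0 < n) (by rw [hfib, mul_one])

/-- Transposing two values in every slot changes the sign of `Q`, because the number of slots
is odd. -/
lemma rename_swap (hn : 2 ≤ n) (hodd : Odd k) (hhom : Q.IsHomogeneous n)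
    (hinv : ∀ (g : Fin k → Matrix.SpecialLinearGroup (Fin n) ℂ) (u : (Fin k → Fin n) → ℂ),
      MvPolynomial.eval (actTensor g u) Q = MvPolynomial.eval u Q)
    (a b : Fin k → Fin n) (hab : ∀ m, a m ≠ b m) :
    rename (fun p m => Equiv.swap (a m) (b m) (p m)) Q = -Q := by
  classical
  obtain ⟨ζ, hζ⟩ := IsAlgClosed.exists_pow_nat_eq (-1 : ℂ) (by omega : 0 < n)
  let g : Fin k → Matrix.SpecialLinearGroup (Fin n) ℂ := fun m =>
    ⟨ζ • (Equiv.swap (a m) (b m)).permMatrix ℂ, by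
      rw [Matrix.det_smul, Matrix.det_permutation, Equiv.Perm.sign_swap (hab m)]
      simp [hζ]⟩
  have hact (u : (Fin k → Fin n) → ℂ) :
      actTensor g u = ζ ^ k • (u ∘ fun p m => Equiv.swap (a m) (b m) (p m)) := by
    funext p
    rw [actTensor_monomial g (fun _ _ => ζ) (fun m => Equiv.swap (a m) (b m))]
    · simp [Function.comp_def]
    · intro m i j
      simp [g, PEquiv.toMatrix_apply, Equiv.toPEquiv_apply, eq_comm]
  refine MvPolynomial.funext fun u => ?_
  rw [eval_rename, map_neg, ← hinv g u, hact]
  have hscale (v : (Fin k → Fin n) → ℂ) (t : ℂ) : eval (t • v) Q = t ^ n * eval v Q := by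
    rw [eval_eq, eval_eq, Finset.mul_sum]
    refine Finset.sum_congr rfl fun d hd => ?_
    have hdeg : ∑ p ∈ d.support, d p = n := by
      have := hhom (mem_support_iff.mp hd)
      rwa [Pi.one_def, ← Finsupp.degree_eq_weight_one] at this
    simp only [Pi.smul_apply, smul_eq_mul, mul_pow, Finset.prod_mul_distrib,
      Finset.prod_pow_eq_pow_sum, hdeg]
    ring
  rw [hscale, ← pow_mul, mul_comm k n, pow_mul, hζ, hodd.neg_one_pow]
  ring

end Invariant

/-- For `k` odd, every `G`-invariant homogeneous degree-`n` polynomial function on tensor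
states in `(ℂ^n)^{⊗k}` is identically zero. -/
theorem stmt1 (n k : ℕ) (hn : 2 ≤ n) (hk : 1 ≤ k) (hodd : Odd k)
    (Q : MvPolynomial (Fin k → Fin n) ℂ) (hhom : Q.IsHomogeneous n)
    (hinv : ∀ (g : Fin k → Matrix.SpecialLinearGroup (Fin n) ℂ) (u : (Fin k → Fin n) → ℂ),
      MvPolynomial.eval (actTensor g u) Q = MvPolynomial.eval u Q) :
    ∀ u : (Fin k → Fin n) → ℂ, MvPolynomial.eval u Q = 0 := by
  classical
  suffices hQ : Q = 0 by simp [hQ]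
  ext d
  rw [coeff_zero]
  by_contra hd
  have hone := fiber_sum_eq_one hn hhom hinv hd
  have hex (m : Fin k) (i : Fin n) : ∃ p : Fin k → Fin n, p m = i ∧ d p ≠ 0 := by
    by_contra! hcon
    have := hone m i
    rw [Finset.sum_eq_zero (fun p hp => hcon p (Finset.mem_filter.mp hp).2)] at this
    omega
  have hle (p : Fin k → Fin n) (m : Fin k) : d p ≤ 1 := by
    rw [← hone m (p m)]
    exact Finset.single_le_sum (f := fun q => d q) (fun _ _ => Nat.zero_le _) (by simp)
  have hdisj (p q : Fin k → Fin n) (hp : d p ≠ 0) (hq : d q ≠ 0) (hpq : p ≠ q) (m : Fin k) :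
      p m ≠ q m := by
    intro h
    have h2 : ∑ x ∈ {p, q}, d x ≤ ∑ x with x m = q m, d x := by
      apply Finset.sum_le_sum_of_subset
      intro x hx
      simp only [Finset.mem_insert, Finset.mem_singleton] at hx
      rcases hx with rfl | rfl <;> simp [h]
    rw [hone, Finset.sum_pair hpq] at h2
    omega
  let m₀ : Fin k := ⟨0, hk⟩
  obtain ⟨a, ha, hda⟩ := hex m₀ ⟨0, by omega⟩
  obtain ⟨b, hb, hdb⟩ := hex m₀ ⟨1, by omega⟩
  have hab : a ≠ b := by
    rintro rfl
    simp [ha] at hb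
  have habm := hdisj a b hda hdb hab
  let s : (Fin k → Fin n) → (Fin k → Fin n) := fun p m => Equiv.swap (a m) (b m) (p m)
  have hss : Function.Involutive s := fun p => by simp [s]
  have hsa : s a = b := by simp [s]
  have hsb : s b = a := by simp [s]
  have hpos (p : Fin k → Fin n) (hp : d p ≠ 0) : d (s p) = d p := by
    have := hle a m₀
    have := hle b m₀
    by_cases hpa : p = a
    · rw [hpa, hsa]; omega
    by_cases hpb : p = b
    · rw [hpb, hsb]; omega
    congr 1
    funext m
    exact Equiv.swap_apply_of_ne_of_ne (hdisj p a hp hda hpa m) (hdisj p b hp hdb hpb m)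
  have hds (p : Fin k → Fin n) : d (s p) = d p := by
    by_cases hp : d p = 0
    · by_contra hne
      have := hpos (s p) (by omega)
      rw [hss p] at this
      exact hne this.symm
    · exact hpos p hp
  have hmap : d.mapDomain s = d := by
    ext p
    conv_lhs => rw [← hss p]
    rw [Finsupp.mapDomain_apply hss.injective, hds]
  have hc := coeff_rename_mapDomain s hss.injective Q d
  rw [hmap, rename_swap hn hodd hhom hinv a b habm, coeff_neg] at hc
  exact hd (neg_eq_self.mp hc)
end

section
/- Let n ≥ 2 and let k ≥ 2 be even. Then the complex vector space of G-invariant homogeneous degree-n polynomial functions on tensor states in (ℂ^n)^{⊗k} is one-dimensional. -/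
/-! The upper bound on the dimension comes from the monomial matrices in `SL(n,ℂ)^k`. Write a
degree-`n` monomial as `∏ i, X (p i)` with `p : Fin n → Fin k → Fin n`. A product of matrices
`diagonal (t m) * permMatrix (π m)` sends monomials to multiples of monomials, so invariance of
`Q` relates the coefficient at `p` to the one at `i m ↦ π m (p i m)` (`coeff_monomial_action`).
Diagonal matrices show that a coefficient of `Q` can be nonzero only if every slot map
`i ↦ p i m` is a permutation (`slot_surjective`). Signed permutation matrices then carry `p` to the
diagonal family `i _ ↦ i`, multiplying the coefficient by a nonzero scalar; hence an invariant `Q`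
whose coefficient at the diagonal monomial vanishes is zero (`eq_zero_of_coeff_diag`).

For the lower bound, Cayley's first hyperdeterminant
`∑ σ, (∏ m, sign (σ m)) ∏ i, X (fun m ↦ σ m i)` is invariant: expanding its value at `g • u` gives
`∑ q, (∏ m, det (columns q · m of g m)) ∏ i, u (q i)`, and these determinants depend on `g m` only
through `det (g m) = 1`. Its diagonal coefficient receives contributions only from `σ` constant in
`m`, each with sign `sign (σ 0) ^ k = 1` because `k` is even, so it is nonzero. -/

open MvPolynomial

/-- The space of `G`-invariant homogeneous degree-`d` polynomial functions on tensor
states in `(ℂ^n)^{⊗k}`, where `G = SL(n,ℂ)^k`. -/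
noncomputable def invPolySpace (n k d : ℕ) : Submodule ℂ (MvPolynomial (Fin k → Fin n) ℂ) where
  carrier := {Q | Q ∈ MvPolynomial.homogeneousSubmodule (Fin k → Fin n) ℂ d ∧
    ∀ (g : Fin k → Matrix.SpecialLinearGroup (Fin n) ℂ) (u : (Fin k → Fin n) → ℂ),
      MvPolynomial.eval (actTensor g u) Q = MvPolynomial.eval u Q}
  add_mem' := by
    intro a b ha hb
    exact ⟨Submodule.add_mem _ ha.1 hb.1, fun g u => by simp [ha.2 g u, hb.2 g u]⟩
  zero_mem' := ⟨Submodule.zero_mem _, fun g u => by simp⟩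
  smul_mem' := by
    intro c a ha
    exact ⟨Submodule.smul_mem _ c ha.1, fun g u => by
      simp [MvPolynomial.smul_eval, ha.2 g u]⟩

/-- The exponent vector of the monomial `∏ i, X (p i)`. -/
noncomputable def famExp {n : ℕ} {α : Type*} (p : Fin n → α) : α →₀ ℕ :=
  ∑ i, Finsupp.single (p i) 1

lemma exists_famExp {α : Type*} (n : ℕ) (d : α →₀ ℕ) (hd : d.degree = n) :
    ∃ p : Fin n → α, d = famExp p := by
  classical
  induction n generalizing d with
  | zero =>
    refine ⟨Fin.elim0, ?_⟩
    simpa [famExp, Finsupp.degree_eq_zero_iff] using hd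
  | succ n ih =>
    have hne : d ≠ 0 := by
      rintro rfl
      simp at hd
    obtain ⟨a, ha⟩ := Finsupp.ne_iff.mp hne
    have hle : Finsupp.single a 1 ≤ d := by
      rw [Finsupp.single_le_iff]
      exact Nat.one_le_iff_ne_zero.mpr ha
    have hsplit : d = Finsupp.single a 1 + (d - Finsupp.single a 1) :=
      (add_tsub_cancel_of_le hle).symm
    have hdeg : (d - Finsupp.single a 1).degree = n := by
      have := congrArg Finsupp.degree hsplit
      rw [map_add, hd, Finsupp.degree_single] at this
      omega
    obtain ⟨p, hp⟩ := ih _ hdeg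
    refine ⟨Fin.cons a p, ?_⟩
    rw [hsplit, hp]
    simp [famExp, Fin.sum_univ_succ]

lemma famExp_ne_zero_iff {n : ℕ} {α : Type*} (p : Fin n → α) (a : α) :
    famExp p a ≠ 0 ↔ ∃ i, p i = a := by
  classical
  simp [famExp, Finsupp.finsetSum_apply, Finsupp.single_apply]

lemma prod_X_eq_monomial {n : ℕ} {α : Type*} (p : Fin n → α) :
    ∏ i, (X (p i) : MvPolynomial α ℂ) = monomial (famExp p) 1 := by
  rw [famExp, monomial_sum_one]
  rfl

/-- Effect on coefficients of the substitution `X p ↦ c p * X (e p)`. -/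
lemma coeff_scaled_rename {α : Type*} [Fintype α] (e : Equiv.Perm α) (c : α → ℂ)
    (Q : MvPolynomial α ℂ) (d : α →₀ ℕ) :
    coeff (d.mapDomain e) (aeval (fun p => C (c p) * X (e p)) Q : MvPolynomial α ℂ)
      = (d.prod fun p j => c p ^ j) * coeff d Q := by
  classical
  induction Q using MvPolynomial.induction_on' with
  | add P Q hP hQ => rw [map_add, coeff_add, coeff_add, hP, hQ, mul_add]
  | monomial s a =>
    have h : (aeval (fun p => C (c p) * X (e p)) (monomial s a) : MvPolynomial α ℂ)
        = monomial (s.mapDomain e) (a * s.prod fun p j => c p ^ j) := by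
      rw [aeval_monomial, monomial_eq, Finsupp.prod_mapDomain_index (by simp)
        (by intros; rw [pow_add])]
      simp only [mul_pow, Finsupp.prod_mul, algebraMap_eq, C_mul, ← C_pow]
      rw [Finsupp.prod, Finsupp.prod, Finsupp.prod, map_prod, mul_assoc]
    rw [h, coeff_monomial, coeff_monomial]
    by_cases hs : s = d
    · subst hs
      simp [mul_comm]
    · rw [if_neg hs, if_neg (fun h' => hs (Finsupp.mapDomain_injective e.injective h')), mul_zero]

/-- Invariance under the element with slots `diagonal (t m) * permMatrix (π m)`, read off on
coefficients. -/
lemma coeff_monomial_action {n k : ℕ} {Q : MvPolynomial (Fin k → Fin n) ℂ}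
    (hQ : ∀ (g : Fin k → Matrix.SpecialLinearGroup (Fin n) ℂ) (u : (Fin k → Fin n) → ℂ),
      eval (actTensor g u) Q = eval u Q)
    (t : Fin k → Fin n → ℂ) (π : Fin k → Equiv.Perm (Fin n))
    (hdet : ∀ m, (∏ a, t m a) * ((Equiv.Perm.sign (π m) : ℤ) : ℂ) = 1)
    (p : Fin n → Fin k → Fin n) :
    coeff (famExp fun i m => π m (p i m)) Q = (∏ i, ∏ m, t m (p i m)) * coeff (famExp p) Q := by
  classical
  let e : Equiv.Perm (Fin k → Fin n) := Equiv.piCongrRight π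
  let c : (Fin k → Fin n) → ℂ := fun p => ∏ m, t m (p m)
  let g : Fin k → Matrix.SpecialLinearGroup (Fin n) ℂ := fun m =>
    ⟨Matrix.diagonal (t m) * (π m).permMatrix ℂ, by
      rw [Matrix.det_mul, Matrix.det_diagonal, Matrix.det_permutation]
      exact hdet m⟩
  have hact : ∀ u p, actTensor g u p = c p * u (e p) := by
    intro u p
    have hg : ∀ m i j, (g m : Matrix (Fin n) (Fin n) ℂ) i j
        = t m i * if π m i = j then 1 else 0 := by
      intro m i j
      simp [g, Matrix.diagonal_mul, PEquiv.toMatrix_apply, Equiv.toPEquiv_apply, eq_comm]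
    simp only [actTensor, hg, Finset.prod_mul_distrib]
    rw [Finset.sum_eq_single (e p)]
    · simp [c, e]
    · intro q _ hq
      obtain ⟨m, hm⟩ := Function.ne_iff.mp hq
      have h0 : (∏ m, if π m (p m) = q m then (1 : ℂ) else 0) = 0 :=
        Finset.prod_eq_zero (Finset.mem_univ m) (if_neg fun h => hm (by simp [e, h]))
      rw [h0]
      simp
    · simp
  have hpoly : (aeval (fun p => C (c p) * X (e p)) Q : MvPolynomial (Fin k → Fin n) ℂ) = Q := by
    apply MvPolynomial.funext
    intro u
    rw [← hQ g u, ← coe_aeval_eq_eval, ← coe_aeval_eq_eval]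
    change (aeval u) ((aeval (fun p => C (c p) * X (e p))) Q) = (aeval (actTensor g u)) Q
    rw [← AlgHom.comp_apply, comp_aeval]
    congr 2
    funext p
    simp [hact]
  have hmap : (famExp p).mapDomain e = famExp fun i m => π m (p i m) := by
    simp only [famExp, Finsupp.mapDomain_finsetSum, Finsupp.mapDomain_single]
    rfl
  have hprod : ((famExp p).prod fun q j => c q ^ j) = ∏ i, ∏ m, t m (p i m) := by
    rw [famExp, ← Finsupp.prod_finsetSum_index (by simp) (by intros; rw [pow_add])]
    simp [c]
  rw [← hmap, ← hprod, ← coeff_scaled_rename, hpoly]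

/-- Balancedness of the exponents occurring in an invariant: a value `a` missing in slot `m` is
excluded by a diagonal matrix with entries `2⁻¹` at `a` and `2` at a value that does occur. -/
lemma slot_surjective {n k : ℕ} {Q : MvPolynomial (Fin k → Fin n) ℂ}
    (hQ : ∀ (g : Fin k → Matrix.SpecialLinearGroup (Fin n) ℂ) (u : (Fin k → Fin n) → ℂ),
      eval (actTensor g u) Q = eval u Q)
    (p : Fin n → Fin k → Fin n) (hp : coeff (famExp p) Q ≠ 0) (m : Fin k) :
    Function.Surjective fun i => p i m := by
  classical
  intro a
  by_contra! hmiss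
  -- `a` itself serves as an index, since rows and values range over the same `Fin n`.
  set b := p a m with hb
  have hba : b ≠ a := hmiss a
  let s : Fin n → ℂ := fun x => if x = a then 2⁻¹ else if x = b then 2 else 1
  have hs : ∏ x, s x = 1 := by
    rw [← Finset.prod_subset (Finset.subset_univ {a, b}), Finset.prod_pair hba.symm]
    · simp [s, hba]
    · intro x _ hx
      simp only [Finset.mem_insert, Finset.mem_singleton, not_or] at hx
      simp [s, hx.1, hx.2]
  have key := coeff_monomial_action hQ (fun m' => if m' = m then s else 1) (fun _ => 1) (by
    intro m'
    by_cases h : m' = m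
    · simp [h, hs]
    · simp [h]) p
  have hinner : ∀ i, (∏ m', (if m' = m then s else 1) (p i m')) = s (p i m) := by
    intro i
    rw [Finset.prod_eq_single m]
    · simp
    · intro m' _ h
      simp [h]
    · simp
  simp only [hinner, Equiv.Perm.coe_one, id_eq] at key
  have hone : ∏ i, s (p i m) = 1 := by
    have : coeff (famExp p) Q = (∏ i, s (p i m)) * coeff (famExp p) Q := key
    exact mul_right_cancel₀ hp (by rw [← this, one_mul])
  have hval : ∀ i, s (p i m) = ((if p i m = b then 2 else 1 : ℕ) : ℂ) := by
    intro i
    simp [s, hmiss i]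
  simp only [hval, ← Nat.cast_prod, Nat.cast_eq_one] at hone
  have := Finset.prod_eq_one_iff.mp hone a (Finset.mem_univ a)
  simp [← hb] at this

lemma eq_zero_of_coeff_diag {n k : ℕ} (hn : 0 < n) {Q : MvPolynomial (Fin k → Fin n) ℂ}
    (hQ : Q ∈ invPolySpace n k n)
    (h0 : coeff (famExp fun (i : Fin n) (_ : Fin k) => i) Q = 0) : Q = 0 := by
  classical
  obtain ⟨hhom, hinv⟩ := hQ
  by_contra hne
  obtain ⟨d, hd⟩ := MvPolynomial.ne_zero_iff.mp hne
  rw [mem_homogeneousSubmodule] at hhom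
  have hdeg : d.degree = n := by
    by_contra h
    exact hd (hhom.coeff_eq_zero h)
  obtain ⟨p, rfl⟩ := exists_famExp n d hdeg
  have hbij : ∀ m, Function.Bijective fun i => p i m := fun m =>
    Finite.surjective_iff_bijective.mp (slot_surjective hinv p hd m)
  let σ : Fin k → Equiv.Perm (Fin n) := fun m => Equiv.ofBijective _ (hbij m)
  let ε : Fin k → ℂ := fun m => ((Equiv.Perm.sign (σ m)⁻¹ : ℤ) : ℂ)
  have hε : ∀ m, ε m * ε m = 1 := by
    intro m
    simp only [ε]
    rw [← Int.cast_mul, ← Units.val_mul, Int.units_mul_self]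
    simp
  have hε0 : ∀ m, ε m ≠ 0 := fun m h => by simpa [h] using hε m
  have key := coeff_monomial_action hinv (fun m => Pi.mulSingle ⟨0, hn⟩ (ε m))
    (fun m => (σ m)⁻¹) (by
      intro m
      rw [Finset.prod_pi_mulSingle', if_pos (Finset.mem_univ _)]
      exact hε m) p
  have hdiag : (fun i m => (σ m)⁻¹ (p i m)) = fun (i : Fin n) (_ : Fin k) => i := by
    funext i m
    exact (σ m).symm_apply_apply i
  rw [hdiag, h0] at key
  refine mul_ne_zero (Finset.prod_ne_zero_iff.mpr fun i _ =>
    Finset.prod_ne_zero_iff.mpr fun m _ => ?_) hd key.symm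
  rw [Pi.mulSingle_apply]
  split_ifs
  · exact hε0 m
  · exact one_ne_zero

/-- Cayley's first hyperdeterminant
`∑ σ, (∏ m, sign (σ m)) ∏ i, X (fun m ↦ σ m i)`, where `σ` runs over `k`-tuples of permutations.
No slot is normalised to the identity, so this is `n!` times the usual form for even `k`. -/
noncomputable def hyperdet (n k : ℕ) : MvPolynomial (Fin k → Fin n) ℂ :=
  ∑ σ : Fin k → Equiv.Perm (Fin n),
    C (∏ m, ((Equiv.Perm.sign (σ m) : ℤ) : ℂ)) * ∏ i, X (fun m => σ m i)

lemma eval_hyperdet_act {n k : ℕ} (g : Fin k → Matrix.SpecialLinearGroup (Fin n) ℂ)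
    (u : (Fin k → Fin n) → ℂ) :
    eval (actTensor g u) (hyperdet n k)
      = ∑ q : Fin n → Fin k → Fin n,
        (∏ m, ((1 : Matrix (Fin n) (Fin n) ℂ).submatrix id fun i => q i m).det) * ∏ i, u (q i) := by
  classical
  have hdet : ∀ (m : Fin k) (f : Fin n → Fin n),
      ((1 : Matrix (Fin n) (Fin n) ℂ).submatrix id f).det
        = ∑ σ : Equiv.Perm (Fin n), ((Equiv.Perm.sign σ : ℤ) : ℂ) *
          ∏ i, (g m : Matrix (Fin n) (Fin n) ℂ) (σ i) (f i) := by
    intro m f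
    have h : (g m : Matrix (Fin n) (Fin n) ℂ).submatrix id f
        = (g m : Matrix (Fin n) (Fin n) ℂ) * (1 : Matrix (Fin n) (Fin n) ℂ).submatrix id f := by
      ext i j
      simp [Matrix.mul_apply, Matrix.one_apply]
    have h2 := congrArg Matrix.det h
    rw [Matrix.det_mul, (g m).det_coe, one_mul] at h2
    rw [← h2, Matrix.det_apply']
    rfl
  have hL : ∀ σ : Fin k → Equiv.Perm (Fin n),
      ∏ i, actTensor g u (fun m => σ m i) = ∑ q : Fin n → Fin k → Fin n,
        (∏ m, ∏ i, (g m : Matrix (Fin n) (Fin n) ℂ) (σ m i) (q i m)) * ∏ i, u (q i) := by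
    intro σ
    simp only [actTensor]
    rw [Finset.prod_univ_sum, Fintype.piFinset_univ]
    refine Finset.sum_congr rfl fun q _ => ?_
    rw [Finset.prod_mul_distrib, Finset.prod_comm]
  simp only [hyperdet, map_sum, map_mul, eval_C, map_prod, eval_X, hL, Finset.mul_sum]
  rw [Finset.sum_comm]
  refine Finset.sum_congr rfl fun q _ => ?_
  simp only [fun m => hdet m (fun i => q i m)]
  rw [Finset.prod_univ_sum, Fintype.piFinset_univ, Finset.sum_mul]
  refine Finset.sum_congr rfl fun σ _ => ?_
  rw [Finset.prod_mul_distrib, mul_assoc]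

lemma hyperdet_mem (n k : ℕ) : hyperdet n k ∈ invPolySpace n k n := by
  classical
  refine ⟨?_, fun g u => ?_⟩
  · refine Submodule.sum_mem _ fun σ _ => ?_
    rw [mem_homogeneousSubmodule]
    have h := IsHomogeneous.prod (Finset.univ : Finset (Fin n))
      (fun i => (X (fun m => σ m i) : MvPolynomial (Fin k → Fin n) ℂ)) (fun _ => 1)
      (fun i _ => isHomogeneous_X _ _)
    simpa using (isHomogeneous_C _ (∏ m, ((Equiv.Perm.sign (σ m) : ℤ) : ℂ))).mul h
  · have h1 : actTensor (1 : Fin k → Matrix.SpecialLinearGroup (Fin n) ℂ) u = u := by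
      funext p
      rw [actTensor, Finset.sum_eq_single p]
      · simp
      · intro q _ hq
        obtain ⟨m, hm⟩ := Function.ne_iff.mp hq
        rw [Finset.prod_eq_zero (Finset.mem_univ m), zero_mul]
        simp [Ne.symm hm]
      · simp
    rw [eval_hyperdet_act, ← eval_hyperdet_act 1 u, h1]

lemma coeff_hyperdet_ne_zero {n k : ℕ} (hk : 0 < k) (heven : Even k) :
    coeff (famExp fun (i : Fin n) (_ : Fin k) => i) (hyperdet n k) ≠ 0 := by
  classical
  have hterm : ∀ σ : Fin k → Equiv.Perm (Fin n),
      coeff (famExp fun (i : Fin n) (_ : Fin k) => i)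
        (C (∏ m, ((Equiv.Perm.sign (σ m) : ℤ) : ℂ)) *
          ∏ i, X (fun m => σ m i) : MvPolynomial (Fin k → Fin n) ℂ)
      = ((if famExp (fun i m => σ m i) = famExp (fun (i : Fin n) (_ : Fin k) => i)
          then 1 else 0 : ℕ) : ℂ) := by
    intro σ
    rw [prod_X_eq_monomial, coeff_C_mul, coeff_monomial]
    split_ifs with h
    · -- Every `i ↦ (σ m i)_m` lies in the support of the diagonal exponent, so is constant in `m`.
      have hconst : ∀ m, σ m = σ ⟨0, hk⟩ := by
        intro m
        ext i
        have hi := (famExp_ne_zero_iff (fun i m => σ m i) (fun m => σ m i)).mpr ⟨i, rfl⟩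
        rw [h, famExp_ne_zero_iff] at hi
        obtain ⟨j, hj⟩ := hi
        rw [← congrFun hj m, ← congrFun hj ⟨0, hk⟩]
      have hsq : (((Equiv.Perm.sign (σ ⟨0, hk⟩) : ℤ) : ℂ)) ^ k = 1 := by
        rw [← Int.cast_pow, ← Units.val_pow_eq_pow_val]
        rcases Int.units_eq_one_or (Equiv.Perm.sign (σ ⟨0, hk⟩)) with h1 | h1 <;>
          simp [h1, heven.neg_one_pow]
      simp only [hconst, Finset.prod_const, Finset.card_univ, Fintype.card_fin, hsq]
      simp
    · simp
  rw [hyperdet, coeff_sum]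
  simp only [hterm]
  rw [← Nat.cast_sum, Nat.cast_ne_zero]
  refine (lt_of_lt_of_le Nat.one_pos ?_).ne'
  refine le_trans (le_of_eq ?_) (Finset.single_le_sum (fun _ _ => Nat.zero_le _)
    (Finset.mem_univ (1 : Fin k → Equiv.Perm (Fin n))))
  simp

/-- For `k ≥ 2` even, the space of `G`-invariant homogeneous degree-`n` polynomial
functions on tensor states in `(ℂ^n)^{⊗k}` is one-dimensional. -/
theorem stmt2 (n k : ℕ) (hn : 2 ≤ n) (hk : 2 ≤ k) (heven : Even k) :
    Module.finrank ℂ (invPolySpace n k n) = 1 := by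
  have hk0 : 0 < k := by omega
  have hcoeff := coeff_hyperdet_ne_zero (n := n) hk0 heven
  have hne : (⟨hyperdet n k, hyperdet_mem n k⟩ : invPolySpace n k n) ≠ 0 := by
    intro h
    have h' : hyperdet n k = 0 := congrArg Subtype.val h
    rw [h', coeff_zero] at hcoeff
    exact hcoeff rfl
  rw [finrank_eq_one_iff_of_nonzero' _ hne]
  rintro ⟨Q, hQ⟩
  set δ : (Fin k → Fin n) →₀ ℕ := famExp fun (i : Fin n) (_ : Fin k) => i
  refine ⟨coeff δ Q / coeff δ (hyperdet n k), Subtype.ext ?_⟩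
  have hmem := Submodule.sub_mem _
    (Submodule.smul_mem _ (coeff δ Q / coeff δ (hyperdet n k)) (hyperdet_mem n k)) hQ
  refine sub_eq_zero.mp (eq_zero_of_coeff_diag (by omega) hmem ?_)
  change coeff δ ((coeff δ Q / coeff δ (hyperdet n k)) • hyperdet n k - Q) = 0
  rw [coeff_sub, coeff_smul, smul_eq_mul, div_mul_cancel₀ _ hcoeff, sub_self]
end

section
/- Let n ≥ 2 and let k ≥ 2 be even. Then the generalized determinant P_{n,k} is a G-invariant homogeneous degree-n polynomial function on tensor states in (ℂ^n)^{⊗k}, i.e. P_{n,k}(g·u) = P_{n,k}(u) for all g ∈ G = SL(n,ℂ)^k and all tensor states u. -/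
/-!
The idea is to symmetrize. Let `F` be the sum of the same terms over *all* tuples
`σ : Fin k → Perm (Fin n)`. Multiplying every entry of a tuple on the right by one permutation `τ`
only reindexes the product over `h` and changes the sign by `ε(τ) ^ k`, which is `1` for even `k`;
hence `F = n! • P` (`fullDet_eq`), and it suffices to show that `F` is invariant.

Expanding `F (g • u)` over the choices `Q : Fin n → Fin k → Fin n` of summation indices, the
coefficient of `∏ h, u (Q h)` factors as a product over the slots `m` of the determinants of the
matrices whose `h`-th column is the `Q h m`-th column of `g m` (`fullDet_actTensor`). By
multiplicativity of the determinant each factor is unchanged when `g m` is replaced by `1`, so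
`F (g • u) = F (1 • u) = F u`.
-/

open MvPolynomial

/-- The generalized determinant `P_{n,k}`:
`P_{n,k}(u) = Σ_{σ₂,…,σ_k ∈ S_n} ε(σ₂)⋯ε(σ_k) ∏_{h=1}^{n} u^{h σ₂(h) ⋯ σ_k(h)}`,
encoded as a sum over tuples `σ : Fin k → Perm (Fin n)` with `σ 0 = 1`. -/
noncomputable def genDet (n k : ℕ) (u : (Fin k → Fin n) → ℂ) : ℂ :=
  ∑ σ ∈ Finset.univ.filter
      (fun σ : Fin k → Equiv.Perm (Fin n) => ∀ j : Fin k, (j : ℕ) = 0 → σ j = 1),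
    ((∏ j, (Equiv.Perm.sign (σ j) : ℤ)) : ℂ) * ∏ h : Fin n, u (fun j => σ j h)

/-- The symmetrized generalized determinant: the sum defining `genDet`, without the normalization
that the first permutation is the identity. -/
noncomputable def fullDet (n k : ℕ) (u : (Fin k → Fin n) → ℂ) : ℂ :=
  ∑ σ : Fin k → Equiv.Perm (Fin n),
    ((∏ j, (Equiv.Perm.sign (σ j) : ℤ)) : ℂ) * ∏ h : Fin n, u (fun j => σ j h)

/-- Right translation of a tuple of permutations by a common permutation does not change its
term, because the number of slots is even. -/
lemma term_mul_right {n k : ℕ} (heven : Even k) (u : (Fin k → Fin n) → ℂ)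
    (σ : Fin k → Equiv.Perm (Fin n)) (τ : Equiv.Perm (Fin n)) :
    ((∏ j, (Equiv.Perm.sign (σ j * τ) : ℤ)) : ℂ) * ∏ h : Fin n, u (fun j => (σ j * τ) h) =
      ((∏ j, (Equiv.Perm.sign (σ j) : ℤ)) : ℂ) * ∏ h : Fin n, u (fun j => σ j h) := by
  have h1 : (((Equiv.Perm.sign τ : ℤˣ) : ℤ) : ℂ) ^ k = 1 := by
    rcases Int.units_eq_one_or (Equiv.Perm.sign τ) with h | h <;> simp [h, heven.neg_one_pow]
  congr 1
  · simp only [Equiv.Perm.sign_mul, Units.val_mul, Int.cast_mul, Finset.prod_mul_distrib,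
      Finset.prod_const, Finset.card_univ, Fintype.card_fin, h1, mul_one]
  · exact Equiv.prod_comp τ (fun h => u (fun j => σ j h))

lemma fullDet_eq {n k : ℕ} (hk : 2 ≤ k) (heven : Even k) (u : (Fin k → Fin n) → ℂ) :
    fullDet n k u = (n.factorial : ℂ) * genDet n k u := by
  have h0 : 0 < k := by omega
  unfold fullDet
  -- Group the tuples by their first entry `τ`; each fibre contributes one copy of `genDet`.
  rw [← Finset.sum_fiberwise Finset.univ (fun σ : Fin k → Equiv.Perm (Fin n) => σ ⟨0, h0⟩)]
  have key : ∀ τ : Equiv.Perm (Fin n),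
      (∑ σ ∈ Finset.univ.filter (fun σ : Fin k → Equiv.Perm (Fin n) => σ ⟨0, h0⟩ = τ),
        ((∏ j, (Equiv.Perm.sign (σ j) : ℤ)) : ℂ) * ∏ h : Fin n, u (fun j => σ j h)) =
      genDet n k u := by
    intro τ
    unfold genDet
    symm
    refine Finset.sum_equiv (Equiv.mulRight (fun _ : Fin k => τ)) ?_ ?_
    · intro σ
      simp only [Finset.mem_filter, Finset.mem_univ, true_and, Equiv.coe_mulRight, Pi.mul_apply,
        mul_eq_right]
      constructor
      · intro h
        exact h _ rfl
      · intro h j hj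
        have : j = ⟨0, h0⟩ := Fin.ext hj
        rw [this, h]
    · intro σ _
      exact (term_mul_right heven u σ τ).symm
  rw [Finset.sum_congr rfl (fun τ _ => key τ), Finset.sum_const, Finset.card_univ,
    Fintype.card_perm, Fintype.card_fin, nsmul_eq_mul]

lemma fullDet_actTensor {n k : ℕ} (g : Fin k → Matrix.SpecialLinearGroup (Fin n) ℂ)
    (u : (Fin k → Fin n) → ℂ) :
    fullDet n k (actTensor g u) =
      ∑ Q : Fin n → Fin k → Fin n,
        (∏ m, ((g m : Matrix (Fin n) (Fin n) ℂ).submatrix id (fun h => Q h m)).det) *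
          ∏ h, u (Q h) := by
  simp only [fullDet, actTensor, Finset.prod_univ_sum, Fintype.piFinset_univ, Finset.mul_sum]
  rw [Finset.sum_comm]
  refine Finset.sum_congr rfl fun Q _ => ?_
  simp only [Matrix.det_apply', Matrix.submatrix_apply, id, Finset.prod_univ_sum,
    Fintype.piFinset_univ, Finset.sum_mul]
  refine Finset.sum_congr rfl fun σ _ => ?_
  rw [Finset.prod_mul_distrib, Finset.prod_mul_distrib, Finset.prod_comm, mul_assoc]

lemma det_submatrix_of_det_one {n : ℕ} (A : Matrix (Fin n) (Fin n) ℂ) (hA : A.det = 1)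
    (f : Fin n → Fin n) :
    (A.submatrix id f).det = ((1 : Matrix (Fin n) (Fin n) ℂ).submatrix id f).det := by
  have h : A.submatrix id f = A * (1 : Matrix (Fin n) (Fin n) ℂ).submatrix id f := by
    ext i j
    simp [Matrix.mul_apply, Matrix.one_apply]
  rw [h, Matrix.det_mul, hA, one_mul]

lemma actTensor_one {n k : ℕ} (u : (Fin k → Fin n) → ℂ) :
    actTensor (fun _ => 1) u = u := by
  funext p
  unfold actTensor
  rw [Finset.sum_eq_single p]
  · simp
  · intro q _ hq
    obtain ⟨m, hm⟩ := Function.ne_iff.mp hq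
    rw [Finset.prod_eq_zero (Finset.mem_univ m), zero_mul]
    simp [Ne.symm hm]
  · simp

lemma fullDet_invariant {n k : ℕ} (g : Fin k → Matrix.SpecialLinearGroup (Fin n) ℂ)
    (u : (Fin k → Fin n) → ℂ) :
    fullDet n k (actTensor g u) = fullDet n k u := by
  conv_rhs => rw [← actTensor_one u]
  rw [fullDet_actTensor, fullDet_actTensor]
  simp only [det_submatrix_of_det_one _ (g _).det_coe, Matrix.SpecialLinearGroup.coe_one]

/-- For `k ≥ 2` even, the generalized determinant `P_{n,k}` is a `G`-invariant homogeneous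
degree-`n` polynomial function on tensor states in `(ℂ^n)^{⊗k}`. -/
theorem stmt3 (n k : ℕ) (hn : 2 ≤ n) (hk : 2 ≤ k) (heven : Even k) :
    (∃ Q ∈ MvPolynomial.homogeneousSubmodule (Fin k → Fin n) ℂ n,
      ∀ u : (Fin k → Fin n) → ℂ, MvPolynomial.eval u Q = genDet n k u) ∧
    ∀ (g : Fin k → Matrix.SpecialLinearGroup (Fin n) ℂ) (u : (Fin k → Fin n) → ℂ),
      genDet n k (actTensor g u) = genDet n k u := by
  constructor
  · refine ⟨∑ σ ∈ Finset.univ.filter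
      (fun σ : Fin k → Equiv.Perm (Fin n) => ∀ j : Fin k, (j : ℕ) = 0 → σ j = 1),
      C ((∏ j, (Equiv.Perm.sign (σ j) : ℤ)) : ℂ) * ∏ h : Fin n, X (fun j => σ j h), ?_, ?_⟩
    · refine Submodule.sum_mem _ fun σ _ => ?_
      rw [mem_homogeneousSubmodule]
      have h := (IsHomogeneous.prod (Finset.univ : Finset (Fin n))
        (fun h => (X (fun j => σ j h) : MvPolynomial (Fin k → Fin n) ℂ)) (fun _ => 1)
        (fun h _ => isHomogeneous_X _ _)).C_mul
        ((∏ j, (Equiv.Perm.sign (σ j) : ℤ)) : ℂ)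
      simpa using h
    · intro u
      simp only [genDet, map_sum, map_mul, map_prod, eval_C, eval_X]
  · intro g u
    have h := fullDet_invariant g u
    rw [fullDet_eq hk heven, fullDet_eq hk heven] at h
    exact mul_left_cancel₀ (Nat.cast_ne_zero.mpr n.factorial_ne_zero) h
end

section
/- Let n ≥ 2 and let k ≥ 2 be even. Let u be the diagonal tensor state in (ℂ^n)^{⊗k} whose components are u^{p p ⋯ p} = 1 for p = 1,…,n and all other components zero. Then P_{n,k}(u) = 1, and u has rank exactly n. -/
/-- The rank of a tensor state `u` in `(ℂ^n)^{⊗k}`: the smallest `s` such that `u` is a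
sum of `s` decomposable tensor states. -/
noncomputable def tensorRank {n k : ℕ} (u : (Fin k → Fin n) → ℂ) : ℕ :=
  sInf {s : ℕ | ∃ w : Fin s → Fin k → Fin n → ℂ, u = fun p => ∑ i, ∏ j, w i j (p j)}

/-- The diagonal state evaluated at `(c, d, …, d)` gives the identity matrix, so any
decomposition of it into `s` decomposable states has `n ≤ s`. -/
theorem le_of_diag_decomposition {n k s : ℕ} (hk : 2 ≤ k) (w : Fin s → Fin k → Fin n → ℂ)
    (hw : (fun p : Fin k → Fin n => if ∃ c : Fin n, ∀ j, p j = c then (1 : ℂ) else 0)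
      = fun p => ∑ i, ∏ j, w i j (p j)) : n ≤ s := by
  let z : Fin k := ⟨0, by omega⟩
  let o : Fin k := ⟨1, by omega⟩
  have hoz : o ≠ z := by simp [o, z]
  let A : Matrix (Fin n) (Fin s) ℂ := fun c i => w i z c
  let B : Matrix (Fin s) (Fin n) ℂ := fun i d => ∏ j ∈ Finset.univ.erase z, w i j d
  have hAB : A * B = 1 := by
    ext c d
    have h := congrFun hw (Function.update (fun _ => d) z c)
    have hdiag : (∃ e : Fin n, ∀ j, Function.update (fun _ : Fin k => d) z c j = e) ↔ c = d := by
      constructor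
      · rintro ⟨e, he⟩
        have h1 := he z
        have h2 := he o
        rw [Function.update_self] at h1
        rw [Function.update_of_ne hoz] at h2
        rw [h1, h2]
      · rintro rfl
        exact ⟨c, fun j => by simp⟩
    simp only [hdiag] at h
    rw [Matrix.mul_apply, Matrix.one_apply, h]
    refine Finset.sum_congr rfl fun i _ => ?_
    rw [← Finset.mul_prod_erase Finset.univ _ (Finset.mem_univ z), Function.update_self]
    congr 1
    refine Finset.prod_congr rfl fun j hj => ?_
    rw [Function.update_of_ne (Finset.ne_of_mem_erase hj)]
  calc n = (A * B).rank := by rw [hAB, Matrix.rank_one, Fintype.card_fin]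
    _ ≤ A.rank := Matrix.rank_mul_le_left A B
    _ ≤ s := A.rank_le_width

/-- For `k ≥ 1`, the diagonal state is the sum of the `n` states `e_c ⊗ ⋯ ⊗ e_c`. -/
theorem diag_decomposition {n k : ℕ} (hk : 0 < k) :
    (fun p : Fin k → Fin n => if ∃ c : Fin n, ∀ j, p j = c then (1 : ℂ) else 0)
      = fun p => ∑ i : Fin n, ∏ j, if p j = i then (1 : ℂ) else 0 := by
  funext p
  simp only [Finset.prod_ite_zero, Finset.prod_const_one, Finset.mem_univ, true_imp_iff]
  split_ifs with h
  · obtain ⟨c, hc⟩ := h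
    rw [Finset.sum_eq_single c]
    · rw [if_pos hc]
    · intro b _ hb
      rw [if_neg]
      intro h
      exact hb ((h ⟨0, hk⟩).symm.trans (hc _))
    · simp
  · refine (Finset.sum_eq_zero fun i _ => if_neg fun hi => h ⟨i, hi⟩).symm

/-- For `k ≥ 2` even, the diagonal tensor state `u` (components `u^{p⋯p} = 1` and all
other components zero) satisfies `P_{n,k}(u) = 1` and has rank exactly `n`. -/
theorem stmt5 (n k : ℕ) (hn : 2 ≤ n) (hk : 2 ≤ k) (heven : Even k) :
    genDet n k (fun p => if ∃ c : Fin n, ∀ j, p j = c then 1 else 0) = 1 ∧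
    tensorRank (fun p : Fin k → Fin n => if ∃ c : Fin n, ∀ j, p j = c then (1 : ℂ) else 0)
      = n := by
  constructor
  · unfold genDet
    rw [Finset.sum_eq_single (fun _ => 1)]
    · have hone : ∀ h : Fin n, ∃ c, ∀ _ : Fin k, h = c := fun h => ⟨h, fun _ => rfl⟩
      simp [hone]
    · intro σ hσ hne
      have h0 : σ ⟨0, by omega⟩ = 1 := (Finset.mem_filter.1 hσ).2 _ rfl
      obtain ⟨j, hj⟩ := Function.ne_iff.1 hne
      obtain ⟨h, hh⟩ : ∃ h, σ j h ≠ h := by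
        by_contra! hall
        exact hj (Equiv.ext hall)
      refine mul_eq_zero_of_right _ (Finset.prod_eq_zero (Finset.mem_univ h) (if_neg ?_))
      rintro ⟨c, hc⟩
      have h1 : σ ⟨0, by omega⟩ h = c := hc _
      rw [h0, Equiv.Perm.one_apply] at h1
      exact hh ((hc j).trans h1.symm)
    · simp
  · unfold tensorRank
    apply le_antisymm
    · exact Nat.sInf_le ⟨fun i _ d => if d = i then 1 else 0, diag_decomposition (by omega)⟩
    · refine le_csInf ⟨n, fun i _ d => if d = i then 1 else 0, diag_decomposition (by omega)⟩ ?_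
      rintro s ⟨w, hw⟩
      exact le_of_diag_decomposition hk w hw
end

section
/- Let n ≥ 2 and let k ≥ 2 be even. Then the generalized determinant P_{n,k} is invariant under the permutation action of the symmetric group S_k on tensor states: P_{n,k}(σ·u) = P_{n,k}(u) for every σ ∈ S_k and every tensor state u in (ℂ^n)^{⊗k}. -/
/-!
Consider the summand `F τ = (∏ j, ε(τ j)) * ∏ h, u (fun j => τ j h)` for an arbitrary tuple of
permutations `τ`, without the normalization `τ 0 = 1`. Multiplying every entry of `τ` on the right
by one permutation `ρ` multiplies the sign product by `ε(ρ) ^ k`, which is `1` for even `k`, and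
only reorders the product over `h`; so `F` is invariant (`genDetTerm_mul_right`). Permuting the
slots of `u` by `σ` replaces `F τ` by `F (τ ∘ σ)`, whose argument is normalized at `σ⁻¹ 0` instead
of at `0`. Right multiplication by `(τ (σ 0))⁻¹` restores the normalization at `0`, and the
resulting map on normalized tuples is a bijection.
-/

/-- The summand of `genDet` at a tuple of permutations `τ` that need not satisfy `τ 0 = 1`. -/
noncomputable def genDetTerm {n k : ℕ} (u : (Fin k → Fin n) → ℂ)
    (τ : Fin k → Equiv.Perm (Fin n)) : ℂ :=
  ((∏ j, (Equiv.Perm.sign (τ j) : ℤ)) : ℂ) * ∏ h : Fin n, u (fun j => τ j h)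

/-- Invariance under the diagonal right action of `S_n`; this is where `k` even is needed. -/
theorem genDetTerm_mul_right {n k : ℕ} (heven : Even k) (u : (Fin k → Fin n) → ℂ)
    (τ : Fin k → Equiv.Perm (Fin n)) (ρ : Equiv.Perm (Fin n)) :
    genDetTerm u (fun j => τ j * ρ) = genDetTerm u τ := by
  unfold genDetTerm
  congr 1
  · have hρ : (((Equiv.Perm.sign ρ : ℤˣ) : ℤ) : ℂ) ^ k = 1 := by
      rcases Int.units_eq_one_or (Equiv.Perm.sign ρ) with h | h <;> simp [h, heven.neg_one_pow]
    simp [Finset.prod_mul_distrib, hρ]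
  · exact Equiv.prod_comp ρ (fun h => u (fun j => τ j h))

/-- Permuting the slots of `u` amounts to permuting the entries of the tuple. -/
theorem genDetTerm_perm {n k : ℕ} (σ : Equiv.Perm (Fin k)) (u : (Fin k → Fin n) → ℂ)
    (τ : Fin k → Equiv.Perm (Fin n)) :
    genDetTerm (fun p => u (fun i => p (σ i))) τ = genDetTerm u (fun j => τ (σ j)) := by
  unfold genDetTerm
  congr 1
  exact (Equiv.prod_comp σ (fun j => (((Equiv.Perm.sign (τ j) : ℤˣ) : ℤ) : ℂ))).symm


/-- For `k ≥ 2` even, the generalized determinant `P_{n,k}` is invariant under the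
permutation action of `S_k` on tensor states: `(σ·u)(p) = u(p ∘ σ)`. -/
theorem stmt7 (n k : ℕ) (hn : 2 ≤ n) (hk : 2 ≤ k) (heven : Even k)
    (σ : Equiv.Perm (Fin k)) (u : (Fin k → Fin n) → ℂ) :
    genDet n k (fun p => u (fun i => p (σ i))) = genDet n k u := by
  let z : Fin k := ⟨0, by omega⟩
  have hz : ∀ τ : Fin k → Equiv.Perm (Fin n),
      (∀ j : Fin k, (j : ℕ) = 0 → τ j = 1) ↔ τ z = 1 := fun τ =>
    ⟨fun h => h z rfl, fun h j hj => (Fin.ext hj : j = z) ▸ h⟩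
  change ∑ τ ∈ _, genDetTerm (fun p => u (fun i => p (σ i))) τ = ∑ τ ∈ _, genDetTerm u τ
  refine Finset.sum_nbij' (fun τ j => τ (σ j) * (τ (σ z))⁻¹)
    (fun τ j => τ (σ.symm j) * (τ (σ.symm z))⁻¹) ?_ ?_ ?_ ?_ ?_
  · intro τ _
    simp [hz]
  · intro τ _
    simp [hz]
  · intro τ hτ
    simp only [Finset.mem_filter, Finset.mem_univ, true_and, hz] at hτ
    funext j
    simp [hτ]
  · intro τ hτ
    simp only [Finset.mem_filter, Finset.mem_univ, true_and, hz] at hτ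
    funext j
    simp [hτ]
  · intro τ _
    rw [genDetTerm_perm]
    exact (genDetTerm_mul_right heven u (fun j => τ (σ j)) _).symm
end

section
/- Let n ≥ 2 and let Q be a homogeneous degree-d polynomial function on n×n complex matrices which is bi-SL(n,ℂ)-invariant, i.e. Q(g u h^{-1}) = Q(u) for all g, h ∈ SL(n,ℂ) and all matrices u. If n divides d, say d = rn, then Q is a scalar multiple of the r-th power of the determinant: Q = λ·det^r for some λ ∈ ℂ; if n does not divide d, then Q = 0. -/
/-!
Over `ℂ` every invertible `u` factors as `u = g * (c • 1)` with `c ^ n = det u` and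
`g = c⁻¹ • u ∈ SL(n,ℂ)`, so invariance and homogeneity force `Q(u) = c ^ d * Q(1)`
(`eval_eq_pow_mul`). If `d = r * n`, then `c ^ d = (det u) ^ r`, which is the claim with
`lam = Q(1)`. If `n ∤ d`, a primitive `n`-th root of unity `ζ` gives `ζ • 1 ∈ SL(n,ℂ)`, hence
`Q(1) = ζ ^ d * Q(1)` with `ζ ^ d ≠ 1`, and `Q(1) = 0`. Both identities extend from invertible
matrices to all matrices because `det` is a nonzero polynomial and `MvPolynomial` over `ℂ` is a
domain (`eq_zero_of_eval_eq_zero`).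
-/

open MvPolynomial

theorem eval_det_mvPolynomialX {n : ℕ} (x : Fin n × Fin n → ℂ) :
    eval x (Matrix.mvPolynomialX (Fin n) (Fin n) ℂ).det
      = (Matrix.of fun i j => x (i, j)).det := by
  rw [RingHom.map_det]
  congr 1
  ext i j
  simp [Matrix.mvPolynomialX]

/-- Zariski density of the invertible matrices: a polynomial vanishing on them is zero, since its
product with `det` vanishes everywhere. -/
theorem eq_zero_of_eval_eq_zero {n : ℕ} (P : MvPolynomial (Fin n × Fin n) ℂ)
    (hP : ∀ u : Matrix (Fin n) (Fin n) ℂ, u.det ≠ 0 →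
      eval (fun ij : Fin n × Fin n => u ij.1 ij.2) P = 0) : P = 0 := by
  have h : P * (Matrix.mvPolynomialX (Fin n) (Fin n) ℂ).det = 0 := by
    apply MvPolynomial.funext
    intro x
    rw [map_mul, map_zero, eval_det_mvPolynomialX]
    by_cases hx : (Matrix.of fun i j => x (i, j)).det = 0
    · rw [hx, mul_zero]
    · have := hP _ hx
      simp only [Matrix.of_apply, Prod.mk.eta] at this
      rw [this, zero_mul]
  exact (mul_eq_zero.mp h).resolve_right (Matrix.det_mvPolynomialX_ne_zero (Fin n) ℂ)

theorem eval_smul_of_isHomogeneous {n d : ℕ} {Q : MvPolynomial (Fin n × Fin n) ℂ}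
    (hhom : Q.IsHomogeneous d) (c : ℂ) (u : Matrix (Fin n) (Fin n) ℂ) :
    eval (fun ij : Fin n × Fin n => (c • u) ij.1 ij.2) Q
      = c ^ d * eval (fun ij : Fin n × Fin n => u ij.1 ij.2) Q := by
  rw [eval_eq, eval_eq, Finset.mul_sum]
  refine Finset.sum_congr rfl fun m hm => ?_
  have hd : ∑ i ∈ m.support, m i = d := by
    have := hhom (mem_support_iff.mp hm)
    rwa [Finsupp.weight_apply, Finsupp.sum, Finset.sum_congr rfl (g := fun i => m i)
      (by simp)] at this
  simp only [Matrix.smul_apply, smul_eq_mul, mul_pow, Finset.prod_mul_distrib,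
    Finset.prod_pow_eq_pow_sum, hd]
  ring

/-- Invariance and homogeneity determine `Q` at an invertible matrix from `Q(1)`, for any choice of
`n`-th root `c` of the determinant. -/
theorem eval_eq_pow_mul {n d : ℕ} (hn : n ≠ 0)
    {Q : MvPolynomial (Fin n × Fin n) ℂ} (hhom : Q.IsHomogeneous d)
    (hinv : ∀ (g h : Matrix.SpecialLinearGroup (Fin n) ℂ) (u : Matrix (Fin n) (Fin n) ℂ),
      eval (fun ij : Fin n × Fin n =>
          ((g : Matrix (Fin n) (Fin n) ℂ) * u * ((h⁻¹ : Matrix.SpecialLinearGroup (Fin n) ℂ) :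
            Matrix (Fin n) (Fin n) ℂ)) ij.1 ij.2) Q
        = eval (fun ij : Fin n × Fin n => u ij.1 ij.2) Q)
    (u : Matrix (Fin n) (Fin n) ℂ) (hu : u.det ≠ 0) (c : ℂ) (hc : c ^ n = u.det) :
    eval (fun ij : Fin n × Fin n => u ij.1 ij.2) Q
      = c ^ d * eval (fun ij : Fin n × Fin n => (1 : Matrix (Fin n) (Fin n) ℂ) ij.1 ij.2) Q := by
  have hc0 : c ≠ 0 := by
    rintro rfl
    exact hu (by rw [← hc, zero_pow hn])
  have hg : (c⁻¹ • u).det = 1 := by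
    rw [Matrix.det_smul, Fintype.card_fin, ← hc, inv_pow, inv_mul_cancel₀ (pow_ne_zero n hc0)]
  have h := hinv ⟨c⁻¹ • u, hg⟩ 1 (c • 1)
  have hm : (c⁻¹ • u) * (c • (1 : Matrix (Fin n) (Fin n) ℂ)) = u := by
    rw [Matrix.mul_smul, Matrix.mul_one, smul_smul, mul_inv_cancel₀ hc0, one_smul]
  rw [eval_smul_of_isHomogeneous hhom, inv_one, Matrix.SpecialLinearGroup.coe_one,
    Matrix.mul_one, Matrix.SpecialLinearGroup.coe_mk, hm] at h
  exact h

/-- A bi-`SL(n,ℂ)`-invariant homogeneous degree-`d` polynomial function on `n×n` complex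
matrices is a scalar multiple of `det^r` if `d = rn`, and is zero if `n` does not
divide `d`. -/
theorem stmt9 (n d : ℕ) (hn : 2 ≤ n)
    (Q : MvPolynomial (Fin n × Fin n) ℂ) (hhom : Q.IsHomogeneous d)
    (hinv : ∀ (g h : Matrix.SpecialLinearGroup (Fin n) ℂ) (u : Matrix (Fin n) (Fin n) ℂ),
      MvPolynomial.eval (fun ij : Fin n × Fin n =>
          ((g : Matrix (Fin n) (Fin n) ℂ) * u * ((h⁻¹ : Matrix.SpecialLinearGroup (Fin n) ℂ) :
            Matrix (Fin n) (Fin n) ℂ)) ij.1 ij.2) Q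
        = MvPolynomial.eval (fun ij : Fin n × Fin n => u ij.1 ij.2) Q) :
    (∀ r : ℕ, d = r * n → ∃ lam : ℂ, ∀ u : Matrix (Fin n) (Fin n) ℂ,
      MvPolynomial.eval (fun ij : Fin n × Fin n => u ij.1 ij.2) Q = lam * (u.det) ^ r) ∧
    (¬ n ∣ d → ∀ u : Matrix (Fin n) (Fin n) ℂ,
      MvPolynomial.eval (fun ij : Fin n × Fin n => u ij.1 ij.2) Q = 0) := by
  have hn0 : n ≠ 0 := by omega
  have key := eval_eq_pow_mul hn0 hhom hinv
  constructor
  · rintro r rfl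
    set lam := eval (fun ij : Fin n × Fin n => (1 : Matrix (Fin n) (Fin n) ℂ) ij.1 ij.2) Q
    refine ⟨lam, ?_⟩
    have hP := eq_zero_of_eval_eq_zero
      (Q - C lam * (Matrix.mvPolynomialX (Fin n) (Fin n) ℂ).det ^ r) fun u hu => by
        obtain ⟨c, hc⟩ := IsAlgClosed.exists_pow_nat_eq u.det (Nat.pos_of_ne_zero hn0)
        rw [map_sub, map_mul, map_pow, eval_C, eval_det_mvPolynomialX, key u hu c hc, mul_comm r n,
          pow_mul, hc, sub_eq_zero, mul_comm]
        rfl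
    intro u
    conv_lhs => rw [sub_eq_zero.mp hP]
    rw [map_mul, map_pow, eval_C, eval_det_mvPolynomialX]
    rfl
  · intro hnd u
    have hζ := Complex.isPrimitiveRoot_exp n hn0
    have h1 := key 1 (by simp) _ (hζ.pow_eq_one.trans Matrix.det_one.symm)
    have hζd := mt (hζ.pow_eq_one_iff_dvd d).mp hnd
    have hone : eval (fun ij : Fin n × Fin n =>
        (1 : Matrix (Fin n) (Fin n) ℂ) ij.1 ij.2) Q = 0 := by
      by_contra h0
      exact hζd (mul_right_cancel₀ h0 (h1.symm.trans (one_mul _).symm))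
    rw [eq_zero_of_eval_eq_zero Q, map_zero]
    intro v hv
    obtain ⟨c, hc⟩ := IsAlgClosed.exists_pow_nat_eq v.det (Nat.pos_of_ne_zero hn0)
    rw [key v hv c hc, hone, mul_zero]
end

section
/- Fix integers n ≥ 2 and r ≥ 2, set d = rn, and let p = d! · ∏_{m=0}^{n-1} m!/(m+r)!. For each k ≥ 1 let a_k denote the complex dimension of the space of G-invariant homogeneous degree-d polynomial functions on tensor states in (ℂ^n)^{⊗k}. Then the sequence a_k · d!/p^k converges, as k → ∞, to c, where c = 4 if n = 2 and d = 4, and c = 1 otherwise. -/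
/-!
Polarization identifies the forms of degree `d` on `(ℂ^n)^{⊗k}` with the symmetric tensors of
order `d` over `(ℂ^n)^{⊗k}`, so `a_k` is the dimension of the `SL(n,ℂ)^k`- and `S_d`-invariants of
`((ℂ^n)^{⊗d})^{⊗k}` (`finrank_invPolySpace`). The `SL(n,ℂ)^k`-invariants are the `k`-th tensor power
of `U = slInv n d`, the space of `SL(n,ℂ)`-invariants in `(ℂ^n)^{⊗d}`, on which `S_d` acts. Averaging
over `S_d` gives `a_k · d! = ∑_σ χ(σ)^k`, where `χ` is the character of `U` (`finrank_invTensors`).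

As `S_d` acts unitarily, `|χ(σ)| < dim U` unless `σ` acts on `U` as a scalar (`trace_lt_or_scalar`).
Since `dim U = p`, after division by `p^k` only the permutations acting as scalars survive. If they
all act as the identity, the limit is their number (`tendsto_of_kernel`).

The value `dim U = p` (`finrank_slInv`) does not require Schur-Weyl duality. An element of `U` is a
highest weight vector, and a highest weight vector vanishing on all lattice words is zero: its first
nonzero slice is again a highest weight vector, and `𝔰𝔩₂`-theory makes the weights dominant
(`eq_zero_of_lattice`). Hence `dim U` is at most the number of lattice words with content `(r, …, r)`.
Conversely, each such word is a standard tableau, the product of the determinants along the columns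
of that tableau is an invariant, and these invariants are independent, because they are triangular
for the colexicographic order (`detTensor_wordEquiv_lt`). The lattice words are counted by the hook
length formula in Frobenius' form, proved by removing one box at a time (`card_latWord_mul`).

If `σ` acts on `U` as a scalar, then testing on the products of determinants shows that `σ`
sends blocks to blocks for every division of the `d` slots into `r` blocks of size `n`
(`block_of_scalar`). This forces `σ = 1` (`eq_one_of_scalar`), except for `n = r = 2`, where it puts
`σ` in the Klein four-group. That group does act trivially on `U` (`kleinFour_trivial`), which is the
origin of the constant `4`.
-/

open MvPolynomial

/-! ### Forms and symmetric tensors -/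

/-- The degree-`d` form `u ↦ ∑_w x(w) u(w 0) ⋯ u(w (d-1))` attached to a tensor `x`. -/
noncomputable def polyOf {ι : Type*} [Fintype ι] (d : ℕ) :
    ((Fin d → ι) → ℂ) →ₗ[ℂ] MvPolynomial ι ℂ :=
  Fintype.linearCombination ℂ (fun w : Fin d → ι => ∏ t, X (w t))

/-- The exponent vector of the monomial `∏ t, X (w t)`. -/
noncomputable def expo {ι : Type*} {d : ℕ} (w : Fin d → ι) : ι →₀ ℕ :=
  ∑ t, Finsupp.single (w t) 1

lemma prod_X_eq {ι : Type*} {d : ℕ} (w : Fin d → ι) :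
    (∏ t, X (w t) : MvPolynomial ι ℂ) = monomial (expo w) 1 := by
  rw [expo, MvPolynomial.monomial_sum_one]; rfl

lemma expo_comp {ι : Type*} {d : ℕ} (w : Fin d → ι) (σ : Equiv.Perm (Fin d)) :
    expo (w ∘ σ) = expo w :=
  Equiv.sum_comp σ (fun t => Finsupp.single (w t) 1)

/-- Two words with the same letters, counted with multiplicity, differ by a permutation of the
positions. -/
lemma exists_perm_of_expo_eq {ι : Type*} {d : ℕ} {w v : Fin d → ι} (h : expo w = expo v) :
    ∃ σ : Equiv.Perm (Fin d), w = v ∘ σ := by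
  classical
  have key : ∀ a, Nonempty ({t // w t = a} ≃ {t // v t = a}) := by
    intro a
    have h1 := DFunLike.congr_fun h a
    simp only [expo, Finsupp.coe_finsetSum, Finset.sum_apply, Finsupp.single_apply] at h1
    rw [← Fintype.card_eq, Fintype.card_subtype, Fintype.card_subtype, Finset.card_filter,
      Finset.card_filter]
    exact h1
  refine ⟨Equiv.ofFiberEquiv (fun a => (key a).some), ?_⟩
  funext t
  exact (Equiv.ofFiberEquiv_map (fun a => (key a).some) t).symm

lemma exists_expo_eq {ι : Type*} {d : ℕ} (m : ι →₀ ℕ) (h : m.degree = d) :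
    ∃ w : Fin d → ι, expo w = m := by
  classical
  induction d generalizing m with
  | zero =>
    refine ⟨Fin.elim0, ?_⟩
    have : m = 0 := (Finsupp.degree_eq_zero_iff m).mp h
    simp [expo, this]
  | succ d ih =>
    have hm : m ≠ 0 := by rintro rfl; simp at h
    obtain ⟨a, ha⟩ := Finsupp.ne_iff.mp hm
    have hle : Finsupp.single a 1 ≤ m := by
      rw [Finsupp.single_le_iff]; exact Nat.one_le_iff_ne_zero.mpr ha
    obtain ⟨w, hw⟩ := ih (m - Finsupp.single a 1) (by
      have : (m - Finsupp.single a 1 + Finsupp.single a 1).degree = d + 1 := by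
        rw [tsub_add_cancel_of_le hle, h]
      simpa using this)
    refine ⟨Fin.cons a w, ?_⟩
    rw [expo, Fin.sum_univ_succ]
    simp only [Fin.cons_zero, Fin.cons_succ]
    change _ + expo w = m
    rw [hw, add_tsub_cancel_of_le hle]

lemma coeff_polyOf {ι : Type*} [Fintype ι] {d : ℕ} (x : (Fin d → ι) → ℂ) (m : ι →₀ ℕ)
    [DecidableEq (ι →₀ ℕ)] :
    coeff m (polyOf d x) = ∑ w, if expo w = m then x w else 0 := by
  classical
  rw [polyOf, Fintype.linearCombination_apply, MvPolynomial.coeff_sum]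
  refine Finset.sum_congr rfl fun w _ => ?_
  rw [prod_X_eq, MvPolynomial.coeff_smul, MvPolynomial.coeff_monomial]
  split_ifs <;> simp

lemma polyOf_mem {ι : Type*} [Fintype ι] {d : ℕ} (x : (Fin d → ι) → ℂ) :
    polyOf d x ∈ MvPolynomial.homogeneousSubmodule ι ℂ d := by
  rw [polyOf, Fintype.linearCombination_apply]
  refine Submodule.sum_mem _ fun w _ => Submodule.smul_mem _ _ ?_
  have := MvPolynomial.IsHomogeneous.prod (R := ℂ) Finset.univ (fun t : Fin d => X (w t))
    (fun _ => 1) (fun t _ => MvPolynomial.isHomogeneous_X ℂ (w t))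
  simpa using this

/-- A symmetric tensor is determined by its form (polarization). -/
lemma polyOf_inj {ι : Type*} [Fintype ι] {d : ℕ} (x : (Fin d → ι) → ℂ)
    (hx : ∀ (σ : Equiv.Perm (Fin d)) w, x (w ∘ σ) = x w) (h : polyOf d x = 0) : x = 0 := by
  classical
  funext w
  have h1 := coeff_polyOf x (expo w)
  rw [h, MvPolynomial.coeff_zero] at h1
  have h2 : ∀ v, (if expo v = expo w then x v else 0) = if expo v = expo w then x w else 0 := by
    intro v
    split_ifs with hv
    · obtain ⟨σ, rfl⟩ := exists_perm_of_expo_eq hv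
      exact hx σ w
    · rfl
  simp_rw [h2] at h1
  rw [← Finset.sum_filter, Finset.sum_const, eq_comm, smul_eq_zero] at h1
  rcases h1 with h1 | h1
  · rw [Finset.card_eq_zero] at h1
    have : w ∈ Finset.univ.filter (fun v => expo v = expo w) := by simp
    rw [h1] at this
    simp at this
  · exact h1

/-- Every form of degree `d` comes from a symmetric tensor: the coefficient of a monomial is spread
evenly over the words with that exponent vector. -/
lemma polyOf_surj {ι : Type*} [Fintype ι] {d : ℕ} (Q : MvPolynomial ι ℂ)
    (hQ : Q ∈ MvPolynomial.homogeneousSubmodule ι ℂ d) :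
    ∃ x : (Fin d → ι) → ℂ, (∀ (σ : Equiv.Perm (Fin d)) w, x (w ∘ σ) = x w) ∧
      polyOf d x = Q := by
  classical
  refine ⟨fun w => coeff (expo w) Q / (Finset.univ.filter
    (fun v : Fin d → ι => expo v = expo w)).card, ?_, ?_⟩
  · intro σ w
    simp only [expo_comp]
  · ext m
    rw [coeff_polyOf]
    have h2 : ∀ w : Fin d → ι, (if expo w = m then coeff (expo w) Q / ((Finset.univ.filter
        (fun v : Fin d → ι => expo v = expo w)).card : ℂ) else 0) =
        if expo w = m then coeff m Q / ((Finset.univ.filter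
        (fun v : Fin d → ι => expo v = m)).card : ℂ) else 0 := by
      intro w
      split_ifs with h
      · rw [h]
      · rfl
    simp_rw [h2]
    rw [← Finset.sum_filter, Finset.sum_const, nsmul_eq_mul]
    by_cases hm : coeff m Q = 0
    · simp [hm]
    · have hdeg : m.degree = d := by
        have := hQ hm
        exact (DFunLike.congr_fun Finsupp.degree_eq_weight_one m).trans this
      obtain ⟨w, hw⟩ := exists_expo_eq m hdeg
      have : ((Finset.univ.filter (fun v : Fin d → ι => expo v = m)).card : ℂ) ≠ 0 := by
        rw [Nat.cast_ne_zero]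
        exact Finset.card_ne_zero_of_mem (a := w) (by simp [hw])
      field_simp

lemma eval_polyOf {ι : Type*} [Fintype ι] {d : ℕ} (x : (Fin d → ι) → ℂ) (u : ι → ℂ) :
    eval u (polyOf d x) = ∑ w, x w * ∏ t, u (w t) := by
  simp [polyOf, Fintype.linearCombination_apply, MvPolynomial.smul_eval, map_sum, map_prod]

/-- Substituting `A u` into the form of `x` amounts to transforming every slot of `x` by the
transpose of `A`. -/
lemma eval_polyOf_mul {ι : Type*} [Fintype ι] {d : ℕ} (x : (Fin d → ι) → ℂ)
    (A : ι → ι → ℂ) (u : ι → ℂ) :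
    eval (fun p => ∑ q, A p q * u q) (polyOf d x) =
      eval u (polyOf d (fun v => ∑ w, (∏ t, A (w t) (v t)) * x w)) := by
  classical
  rw [eval_polyOf, eval_polyOf]
  simp_rw [Finset.prod_univ_sum, Fintype.piFinset_univ, Finset.prod_mul_distrib, Finset.mul_sum,
    Finset.sum_mul]
  rw [Finset.sum_comm]
  refine Finset.sum_congr rfl fun v _ => Finset.sum_congr rfl fun w _ => ?_
  ring

/-! ### Matrices acting on tensor powers -/

/-- The matrix of the tensor product `⨂ m, A m`, in the basis of `κ`-tuples. -/
def tmat {κ J : Type*} [Fintype κ] (A : κ → Matrix J J ℂ) : Matrix (κ → J) (κ → J) ℂ :=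
  Matrix.of fun p q => ∏ m, A m (p m) (q m)

lemma tmat_mul {κ J : Type*} [Fintype κ] [Fintype J] [DecidableEq κ] (A B : κ → Matrix J J ℂ) :
    tmat A * tmat B = tmat (fun m => A m * B m) := by
  ext p q
  simp only [tmat, Matrix.mul_apply, Matrix.of_apply, ← Finset.prod_mul_distrib]
  rw [Finset.prod_univ_sum, Fintype.piFinset_univ]

lemma trace_tmat {κ J : Type*} [Fintype κ] [Fintype J] [DecidableEq κ] (A : κ → Matrix J J ℂ) :
    (tmat A).trace = ∏ m, (A m).trace := by
  simp only [tmat, Matrix.trace, Matrix.diag, Matrix.of_apply]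
  rw [Finset.prod_univ_sum, Fintype.piFinset_univ]

lemma tmat_one {κ J : Type*} [Fintype κ] [DecidableEq J] :
    tmat (fun _ : κ => (1 : Matrix J J ℂ)) = 1 := by
  classical
  ext p q
  simp only [tmat, Matrix.of_apply, Matrix.one_apply, Finset.prod_boole, Finset.mem_univ,
    true_implies, funext_iff]

/-- The action of a permutation of the `d` tensor slots on `(ℂ^n)^{⊗d}`, as a matrix. -/
def permMat (n : ℕ) {d : ℕ} (σ : Equiv.Perm (Fin d)) :
    Matrix (Fin d → Fin n) (Fin d → Fin n) ℂ :=
  Matrix.of fun p q => if q = p ∘ σ then 1 else 0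

/-- The matrix `g ⊗ ⋯ ⊗ g` acting on `(ℂ^n)^{⊗d}`. -/
def glMat {n : ℕ} (d : ℕ) (g : Matrix (Fin n) (Fin n) ℂ) :
    Matrix (Fin d → Fin n) (Fin d → Fin n) ℂ :=
  tmat (fun _ : Fin d => g)

lemma permMat_mulVec {n d : ℕ} (σ : Equiv.Perm (Fin d)) (x : (Fin d → Fin n) → ℂ)
    (p : Fin d → Fin n) : (permMat n σ).mulVec x p = x (p ∘ σ) := by
  simp [permMat, Matrix.mulVec, dotProduct]

lemma permMat_mul {n d : ℕ} (σ τ : Equiv.Perm (Fin d)) :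
    permMat n σ * permMat n τ = permMat n (σ * τ) := by
  ext p q
  simp only [permMat, Matrix.mul_apply, Matrix.of_apply, ite_mul, one_mul, zero_mul,
    Finset.sum_ite_eq', Finset.mem_univ, if_true, Equiv.Perm.coe_mul, Function.comp_assoc]
  exact if_congr Iff.rfl rfl rfl

lemma permMat_one {n d : ℕ} : permMat n (1 : Equiv.Perm (Fin d)) = 1 := by
  ext p q
  simp only [permMat, Matrix.of_apply, Matrix.one_apply, Equiv.Perm.coe_one, Function.comp_id,
    eq_comm]

lemma permMat_conjTranspose {n d : ℕ} (σ : Equiv.Perm (Fin d)) :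
    (permMat n σ).conjTranspose = permMat n σ⁻¹ := by
  ext p q
  have : (p = q ∘ σ) ↔ (q = p ∘ (σ⁻¹ : Equiv.Perm (Fin d))) := by
    constructor
    · rintro rfl; funext t; simp
    · rintro rfl; funext t; simp
  simp only [permMat, Matrix.conjTranspose_apply, Matrix.of_apply, this]
  split_ifs <;> simp

lemma permMat_glMat {n d : ℕ} (σ : Equiv.Perm (Fin d)) (g : Matrix (Fin n) (Fin n) ℂ) :
    permMat n σ * glMat d g = glMat d g * permMat n σ := by
  ext p q
  have : ∀ v : Fin d → Fin n, (q = v ∘ σ) ↔ (v = q ∘ (σ⁻¹ : Equiv.Perm (Fin d))) := by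
    intro v
    constructor
    · rintro rfl; funext t; simp
    · rintro rfl; funext t; simp
  simp only [permMat, glMat, tmat, Matrix.mul_apply, Matrix.of_apply, this, ite_mul, mul_ite,
    one_mul, zero_mul, mul_one, mul_zero, Finset.sum_ite_eq', Finset.mem_univ, if_true]
  rw [← Equiv.prod_comp σ (fun t => g (p t) ((q ∘ (σ⁻¹ : Equiv.Perm (Fin d))) t))]
  simp

lemma tmat_permMat_mulVec {n d k : ℕ} (σ : Equiv.Perm (Fin d))
    (y : (Fin k → Fin d → Fin n) → ℂ) (p : Fin k → Fin d → Fin n) :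
    (tmat (fun _ => permMat n σ)).mulVec y p = y (fun m => p m ∘ σ) := by
  classical
  have h : ∀ q, tmat (fun _ => permMat n σ) p q =
      if q = (fun m => p m ∘ σ) then (1 : ℂ) else 0 := fun q => by
    simp only [tmat, permMat, Matrix.of_apply, Finset.prod_boole, Finset.mem_univ,
      true_implies, funext_iff]
  simp [Matrix.mulVec, dotProduct, h]

/-- The tensors invariant under simultaneous permutations of the `d` slots in each of the
`k` factors `(ℂ^n)^{⊗d}`, and under `SL(n,ℂ)^k`. -/
def invTensors (n k d : ℕ) : Submodule ℂ ((Fin k → Fin d → Fin n) → ℂ) where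
  carrier := {y | (∀ σ : Equiv.Perm (Fin d), (tmat (fun _ => permMat n σ)).mulVec y = y) ∧
    ∀ g : Fin k → Matrix.SpecialLinearGroup (Fin n) ℂ,
      (tmat (fun m => glMat d (g m : Matrix (Fin n) (Fin n) ℂ))).mulVec y = y}
  add_mem' := fun ha hb => ⟨fun σ => by rw [Matrix.mulVec_add, ha.1, hb.1],
    fun g => by rw [Matrix.mulVec_add, ha.2, hb.2]⟩
  zero_mem' := ⟨fun σ => Matrix.mulVec_zero _, fun g => Matrix.mulVec_zero _⟩
  smul_mem' := fun c x ha => ⟨fun σ => by rw [Matrix.mulVec_smul, ha.1],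
    fun g => by rw [Matrix.mulVec_smul, ha.2]⟩

/-- Regrouping `d` slots of `k`-fold tensors into `k` slots of `d`-fold tensors. -/
noncomputable def regroup (n k d : ℕ) :
    ((Fin k → Fin d → Fin n) → ℂ) ≃ₗ[ℂ] ((Fin d → Fin k → Fin n) → ℂ) :=
  LinearEquiv.funCongrLeft ℂ ℂ (Equiv.piComm fun (_ : Fin d) (_ : Fin k) => Fin n)

lemma regroup_apply {n k d : ℕ} (y : (Fin k → Fin d → Fin n) → ℂ) (w : Fin d → Fin k → Fin n) :
    regroup n k d y w = y (fun m t => w t m) := rfl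

lemma regroup_symm_inv {n k d : ℕ} (y : (Fin k → Fin d → Fin n) → ℂ) :
    (∀ σ : Equiv.Perm (Fin d), (tmat (fun _ => permMat n σ)).mulVec y = y) ↔
    (∀ (σ : Equiv.Perm (Fin d)) w, regroup n k d y (w ∘ σ) = regroup n k d y w) := by
  constructor
  · intro h σ w
    have := congrFun (h σ) (fun m t => w t m)
    rw [tmat_permMat_mulVec] at this
    exact this
  · intro h σ
    funext p
    rw [tmat_permMat_mulVec]
    exact h σ (fun t m => p m t)

/-- The action on tensor states, transported to tensors. The transposes are harmless, since
transposition is a bijection of `SL(n,ℂ)`. -/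
lemma eval_actTensor {n k d : ℕ} (g : Fin k → Matrix.SpecialLinearGroup (Fin n) ℂ)
    (u : (Fin k → Fin n) → ℂ) (y : (Fin k → Fin d → Fin n) → ℂ) :
    eval (actTensor g u) (polyOf d (regroup n k d y)) =
      eval u (polyOf d (regroup n k d ((tmat (fun m => glMat d
        ((g m).transpose : Matrix (Fin n) (Fin n) ℂ))).mulVec y))) := by
  have h := eval_polyOf_mul (regroup n k d y)
    (fun p q => ∏ m, ((g m : Matrix (Fin n) (Fin n) ℂ) (p m) (q m))) u
  refine h.trans ?_
  congr 3
  funext v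
  rw [regroup_apply]
  simp only [Matrix.mulVec, dotProduct, tmat, glMat, Matrix.of_apply,
    Matrix.SpecialLinearGroup.coe_transpose, Matrix.transpose_apply]
  refine Fintype.sum_equiv (Equiv.piComm _) _ _ fun w => ?_
  rw [Finset.prod_comm]
  rfl

/-- Polarization identifies the invariant forms of degree `d` with the invariant tensors. -/
lemma finrank_invPolySpace (n k d : ℕ) :
    Module.finrank ℂ (invPolySpace n k d) = Module.finrank ℂ (invTensors n k d) := by
  let Ψ : ((Fin k → Fin d → Fin n) → ℂ) →ₗ[ℂ] MvPolynomial (Fin k → Fin n) ℂ :=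
    (polyOf d).comp (regroup n k d).toLinearMap
  have hinj : ∀ y, (∀ σ : Equiv.Perm (Fin d), (tmat (fun _ => permMat n σ)).mulVec y = y) →
      Ψ y = 0 → y = 0 := by
    intro y h1 h2
    have := polyOf_inj (regroup n k d y) ((regroup_symm_inv y).mp h1) h2
    simpa using this
  have hmap : (invTensors n k d).map Ψ = invPolySpace n k d := by
    ext Q
    constructor
    · rintro ⟨y, ⟨hy1, hy2⟩, rfl⟩
      refine ⟨polyOf_mem _, fun g u => ?_⟩
      change eval (actTensor g u) (polyOf d (regroup n k d y)) = _
      rw [eval_actTensor, hy2 (fun m => (g m).transpose)]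
      rfl
    · rintro ⟨hQ1, hQ2⟩
      obtain ⟨x, hx, rfl⟩ := polyOf_surj Q hQ1
      obtain ⟨y, rfl⟩ := (regroup n k d).surjective x
      have hy1 := (regroup_symm_inv y).mpr hx
      refine ⟨y, ⟨hy1, fun g => ?_⟩, rfl⟩
      rw [← sub_eq_zero]
      refine hinj _ (fun σ => ?_) ?_
      · rw [Matrix.mulVec_sub, hy1, Matrix.mulVec_mulVec, tmat_mul]
        simp_rw [permMat_glMat]
        rw [← tmat_mul, ← Matrix.mulVec_mulVec, hy1]
      · rw [map_sub, sub_eq_zero]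
        refine MvPolynomial.funext fun u => ?_
        have h1 := eval_actTensor (fun m => (g m).transpose) u y
        rw [hQ2] at h1
        simp only [Matrix.SpecialLinearGroup.coe_transpose, Matrix.transpose_transpose] at h1
        exact h1.symm
  rw [← hmap, ← LinearMap.range_domRestrict]
  refine LinearMap.finrank_range_of_inj ?_
  rw [← LinearMap.ker_eq_bot, LinearMap.ker_eq_bot']
  intro y hy
  exact Subtype.ext (hinj y y.2.1 hy)

/-! ### The dimension of the invariants as a character sum -/

/-- The `SL(n,ℂ)`-invariants of `(ℂ^n)^{⊗d}`. -/
def slInv (n d : ℕ) : Submodule ℂ ((Fin d → Fin n) → ℂ) where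
  carrier := {x | ∀ g : Matrix.SpecialLinearGroup (Fin n) ℂ,
    (glMat d (g : Matrix (Fin n) (Fin n) ℂ)).mulVec x = x}
  add_mem' := fun ha hb g => by rw [Matrix.mulVec_add, ha, hb]
  zero_mem' := fun g => Matrix.mulVec_zero _
  smul_mem' := fun c x ha g => by rw [Matrix.mulVec_smul, ha]

/-- The matrix of the orthogonal projection onto a subspace; it is Hermitian, which is what the
character bound `trace_lt_or_scalar` needs. -/
lemma exists_orthProj {J : Type*} [Fintype J] [DecidableEq J] (U : Submodule ℂ (J → ℂ)) :
    ∃ P : Matrix J J ℂ, P.conjTranspose = P ∧ (∀ x, P.mulVec x ∈ U) ∧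
      ∀ x ∈ U, P.mulVec x = x := by
  let U' : Submodule ℂ (EuclideanSpace ℂ J) :=
    U.comap (WithLp.linearEquiv 2 ℂ (J → ℂ)).toLinearMap
  let P : Matrix J J ℂ := (Matrix.toEuclideanCLM (n := J) (𝕜 := ℂ)).symm U'.starProjection
  have hP : ∀ x, P.mulVec x = WithLp.ofLp (U'.starProjection (WithLp.toLp 2 x)) := by
    intro x
    have := Matrix.ofLp_toEuclideanCLM (𝕜 := ℂ) P (WithLp.toLp 2 x)
    rw [← this]
    simp only [P, StarAlgEquiv.apply_symm_apply]
  refine ⟨P, ?_, fun x => ?_, fun x hx => ?_⟩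
  · have h := isSelfAdjoint_starProjection U'
    have h2 : Matrix.toEuclideanCLM (n := J) (𝕜 := ℂ) P = U'.starProjection :=
      StarAlgEquiv.apply_symm_apply _ _
    apply (Matrix.toEuclideanCLM (n := J) (𝕜 := ℂ)).injective
    have h3 := (Matrix.toEuclideanCLM (n := J) (𝕜 := ℂ)).map_star' P
    exact h3.trans ((congrArg star h2).trans (h.star_eq.trans h2.symm))
  · rw [hP]
    exact (U'.starProjection_apply_mem (WithLp.toLp 2 x) : _)
  · rw [hP]
    have : (WithLp.toLp 2 x) ∈ U' := hx
    rw [Submodule.starProjection_eq_self_iff.mpr this]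

lemma trace_eq_finrank_of_proj {J : Type*} [Fintype J] [DecidableEq J]
    (U : Submodule ℂ (J → ℂ)) (P : Matrix J J ℂ) (h1 : ∀ x, P.mulVec x ∈ U)
    (h2 : ∀ x ∈ U, P.mulVec x = x) : P.trace = Module.finrank ℂ U := by
  have : LinearMap.IsProj U (Matrix.toLin' P) := ⟨h1, h2⟩
  rw [← this.trace, Matrix.trace_toLin'_eq]

lemma permMat_mem_slInv {n d : ℕ} (σ : Equiv.Perm (Fin d)) {x : (Fin d → Fin n) → ℂ}
    (hx : x ∈ slInv n d) : (permMat n σ).mulVec x ∈ slInv n d := fun g => by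
  rw [Matrix.mulVec_mulVec, ← permMat_glMat, ← Matrix.mulVec_mulVec, hx]

lemma matrix_ext_mulVec {J : Type*} [Fintype J] [DecidableEq J] {A B : Matrix J J ℂ}
    (h : ∀ x, A.mulVec x = B.mulVec x) : A = B :=
  Matrix.toLin'.injective (LinearMap.ext h)

/-- A tensor is invariant under `SL(n,ℂ)^k` iff it is fixed by `P ⊗ ⋯ ⊗ P`, for any projection
`P` onto the invariants of a single factor. -/
lemma inv_iff_proj {n k d : ℕ} (P : Matrix (Fin d → Fin n) (Fin d → Fin n) ℂ)
    (h1 : ∀ x, P.mulVec x ∈ slInv n d) (h2 : ∀ x ∈ slInv n d, P.mulVec x = x)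
    (y : (Fin k → Fin d → Fin n) → ℂ) :
    (∀ g : Fin k → Matrix.SpecialLinearGroup (Fin n) ℂ,
      (tmat (fun m => glMat d (g m : Matrix (Fin n) (Fin n) ℂ))).mulVec y = y) ↔
    (tmat (fun _ => P)).mulVec y = y := by
  classical
  constructor
  · intro hy
    -- In a single slot `m`, every slice of `y` is invariant, so it is fixed by `P`.
    have hupd : ∀ (m : Fin k) (A : Matrix (Fin d → Fin n) (Fin d → Fin n) ℂ)
        (p : Fin k → Fin d → Fin n), (tmat (Function.update (fun _ => 1) m A)).mulVec y p =
        A.mulVec (fun a => y (Function.update p m a)) (p m) := by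
      intro m A p
      have hz : ∀ q, tmat (Function.update (fun _ => 1) m A) p q ≠ 0 →
          ∃ a, Function.update p m a = q := by
        intro q hq
        refine ⟨q m, ?_⟩
        funext m'
        by_cases hm : m' = m
        · subst hm; simp
        · rw [Function.update_of_ne hm]
          by_contra hne
          refine hq (Finset.prod_eq_zero (Finset.mem_univ m') ?_)
          rw [Function.update_of_ne hm, Matrix.one_apply_ne hne]
      have hv : ∀ a, tmat (Function.update (fun _ => 1) m A) p (Function.update p m a) =
          A (p m) a := by
        intro a
        simp only [tmat, Matrix.of_apply]
        rw [Finset.prod_eq_single m]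
        · simp
        · intro m' _ hm
          simp [Function.update_of_ne hm]
        · simp
      simp only [Matrix.mulVec, dotProduct]
      symm
      refine Finset.sum_of_injOn (fun a => Function.update p m a)
        ((Function.update_injective p m).injOn) (by simp) ?_ ?_
      · intro q _ hq
        by_contra hne
        obtain ⟨a, ha⟩ := hz q (left_ne_zero_of_mul hne)
        exact hq ⟨a, by simp, ha⟩
      · intro a _
        rw [hv]
    have hslot : ∀ m : Fin k, (tmat (Function.update (fun _ => 1) m P)).mulVec y = y := by
      intro m
      funext p
      rw [hupd, h2]
      · simp
      · intro g
        have key := hy (Function.update (fun _ => 1) m g)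
        have e : (fun m' => glMat d ((Function.update (fun _ => 1) m g :
            Fin k → Matrix.SpecialLinearGroup (Fin n) ℂ) m' : Matrix (Fin n) (Fin n) ℂ)) =
            Function.update (fun _ => 1) m (glMat d (g : Matrix (Fin n) (Fin n) ℂ)) := by
          funext m'
          by_cases hm : m' = m
          · subst hm; simp
          · simp [Function.update_of_ne hm, glMat, tmat_one]
        rw [e] at key
        funext a
        have := congrFun key (Function.update p m a)
        rw [hupd] at this
        simpa using this
    have hs : ∀ s : Finset (Fin k), (tmat (fun m => if m ∈ s then P else 1)).mulVec y = y := by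
      intro s
      induction s using Finset.induction_on with
      | empty => simp [tmat_one]
      | insert m s hm ih =>
        have e : (fun m' => if m' ∈ insert m s then P else 1) =
            fun m' => Function.update (fun _ => 1) m P m' * (if m' ∈ s then P else 1) := by
          funext m'
          by_cases h : m' = m
          · subst h; simp [hm]
          · simp [h]
        rw [e, ← tmat_mul, ← Matrix.mulVec_mulVec, ih, hslot]
    simpa using hs Finset.univ
  · intro hy g
    rw [← hy, Matrix.mulVec_mulVec, tmat_mul]
    congr 2
    funext m
    refine matrix_ext_mulVec fun x => ?_
    rw [← Matrix.mulVec_mulVec]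
    exact h1 x (g m)

/-- If a finite group acts by matrices `T` and preserves the range of the idempotent `Q`, then the
invariants of the group in this range are the range of the idempotent `|G|⁻¹ ∑ T σ Q`. -/
lemma finrank_avg {K G : Type*} [Fintype K] [DecidableEq K] [Group G] [Fintype G]
    (T : G → Matrix K K ℂ) (Q : Matrix K K ℂ) (hTT : ∀ τ σ, T τ * T σ = T (τ * σ))
    (hQTQ : ∀ σ, Q * (T σ * Q) = T σ * Q) (V : Submodule ℂ (K → ℂ))
    (hV : ∀ y, y ∈ V ↔ (∀ σ, (T σ).mulVec y = y) ∧ Q.mulVec y = y) :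
    (Module.finrank ℂ V : ℂ) * (Fintype.card G : ℂ) = ∑ σ, (T σ * Q).trace := by
  have hd : (Fintype.card G : ℂ) ≠ 0 := Nat.cast_ne_zero.mpr Fintype.card_ne_zero
  set Z := (Fintype.card G : ℂ)⁻¹ • ∑ σ, T σ * Q with hZ
  have hTZ : ∀ τ, T τ * Z = Z := by
    intro τ
    simp only [hZ, Matrix.mul_smul, Matrix.mul_sum, ← mul_assoc, hTT]
    congr 1
    exact Equiv.sum_comp (Equiv.mulLeft τ) (fun σ => T σ * Q)
  have hQZ : Q * Z = Z := by
    simp only [hZ, Matrix.mul_smul, Matrix.mul_sum, hQTQ]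
  have htr := trace_eq_finrank_of_proj V Z (fun x => by
    rw [hV]
    exact ⟨fun σ => by rw [Matrix.mulVec_mulVec, hTZ], by rw [Matrix.mulVec_mulVec, hQZ]⟩)
    (fun y hy => by
      rw [hV] at hy
      simp only [hZ, Matrix.smul_mulVec, Matrix.sum_mulVec, ← Matrix.mulVec_mulVec, hy.2, hy.1]
      rw [Finset.sum_const, Finset.card_univ,
        ← Nat.cast_smul_eq_nsmul ℂ, smul_smul, inv_mul_cancel₀ hd, one_smul])
  rw [← htr, hZ, Matrix.trace_smul, Matrix.trace_sum, smul_eq_mul]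
  field_simp

/-- `dim` of the invariant tensors as an average over `S_d` of `k`-th powers of the character
of `S_d` on the invariants of a single factor. -/
lemma finrank_invTensors {n d : ℕ} (P : Matrix (Fin d → Fin n) (Fin d → Fin n) ℂ)
    (h1 : ∀ x, P.mulVec x ∈ slInv n d) (h2 : ∀ x ∈ slInv n d, P.mulVec x = x) (k : ℕ) :
    (Module.finrank ℂ (invTensors n k d) : ℂ) * (Nat.factorial d : ℂ) =
      ∑ σ : Equiv.Perm (Fin d), (permMat n σ * P).trace ^ k := by
  classical
  have h := finrank_avg (fun σ : Equiv.Perm (Fin d) => tmat (fun _ : Fin k => permMat n σ))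
    (tmat (fun _ => P)) (fun τ σ => by simp only [tmat_mul, permMat_mul])
    (fun σ => by
      simp only [tmat_mul]
      congr 1
      funext m
      refine matrix_ext_mulVec fun x => ?_
      rw [← Matrix.mulVec_mulVec, h2]
      rw [← Matrix.mulVec_mulVec]
      exact permMat_mem_slInv σ (h1 x))
    (invTensors n k d) (fun y => and_congr Iff.rfl (inv_iff_proj P h1 h2 y))
  rw [Fintype.card_perm, Fintype.card_fin] at h
  rw [h]
  simp only [tmat_mul, trace_tmat, Finset.prod_const, Finset.card_univ, Fintype.card_fin]

open scoped ComplexOrder in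
/-- The character bound: a permutation acts on the invariants with trace of modulus less than the
dimension, unless it acts as a scalar. -/
lemma trace_lt_or_scalar {n d : ℕ} (P : Matrix (Fin d → Fin n) (Fin d → Fin n) ℂ)
    (h0 : P.conjTranspose = P)
    (h1 : ∀ x, P.mulVec x ∈ slInv n d) (h2 : ∀ x ∈ slInv n d, P.mulVec x = x)
    (hpos : 0 < Module.finrank ℂ (slInv n d)) (σ : Equiv.Perm (Fin d)) :
    ‖(permMat n σ * P).trace‖ < Module.finrank ℂ (slInv n d) ∨
      ∃ ζ : ℂ, ζ ≠ 0 ∧ ∀ x ∈ slInv n d, (permMat n σ).mulVec x = ζ • x := by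
  classical
  set N := Module.finrank ℂ (slInv n d) with hN
  have hN0 : (N : ℂ) ≠ 0 := Nat.cast_ne_zero.mpr hpos.ne'
  have hPP : P * P = P := matrix_ext_mulVec fun x => by
    rw [← Matrix.mulVec_mulVec, h2 _ (h1 x)]
  have htr : P.trace = N := trace_eq_finrank_of_proj _ P h1 h2
  set M := permMat n σ * P with hM
  set ζ : ℂ := M.trace / N with hζ
  have hMt : M.trace = ζ * N := by rw [hζ]; field_simp
  have hMP : P * M = M := matrix_ext_mulVec fun x => by
    rw [← Matrix.mulVec_mulVec, h2]
    rw [hM, ← Matrix.mulVec_mulVec]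
    exact permMat_mem_slInv σ (h1 x)
  have hMH : M.conjTranspose * P = M.conjTranspose := by
    have := congrArg Matrix.conjTranspose hMP
    rwa [Matrix.conjTranspose_mul, h0] at this
  have hMM : M.conjTranspose * M = P := by
    rw [hM, Matrix.conjTranspose_mul, h0, permMat_conjTranspose, mul_assoc,
      ← mul_assoc (permMat n σ⁻¹), permMat_mul, inv_mul_cancel, permMat_one, one_mul, hPP]
  -- `M` restricts to a unitary map of the invariants; the squared Hilbert-Schmidt distance of `M`
  -- to the nearest scalar measures how far `‖ζ‖` is from `1`.
  have key : ((M - ζ • P).conjTranspose * (M - ζ • P)).trace = ((N * (1 - ‖ζ‖ ^ 2) : ℝ) : ℂ) := by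
    rw [Matrix.conjTranspose_sub, Matrix.conjTranspose_smul, h0, sub_mul, mul_sub, mul_sub,
      hMM, Matrix.mul_smul, hMH, Matrix.smul_mul, hMP, Matrix.smul_mul, Matrix.mul_smul, hPP]
    simp only [Matrix.trace_sub, Matrix.trace_smul, Matrix.trace_conjTranspose, hMt, htr,
      smul_eq_mul, star_mul', star_natCast]
    have : (ζ * star ζ : ℂ) = ((‖ζ‖ ^ 2 : ℝ) : ℂ) := by
      have := Complex.mul_conj' ζ
      push_cast
      exact this
    push_cast at this ⊢
    linear_combination (-(N : ℂ)) * this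
  have hnn : 0 ≤ (N : ℝ) * (1 - ‖ζ‖ ^ 2) := by
    have h := (Matrix.posSemidef_conjTranspose_mul_self (M - ζ • P)).trace_nonneg
    rw [key] at h
    exact_mod_cast h
  have hNpos : (0 : ℝ) < N := by exact_mod_cast hpos
  have hle : ‖ζ‖ ^ 2 ≤ 1 := by
    have := nonneg_of_mul_nonneg_right hnn hNpos
    linarith
  rcases hle.lt_or_eq with hlt | heq
  · left
    rw [hMt, norm_mul, Complex.norm_natCast]
    have : ‖ζ‖ < 1 := by
      by_contra hge
      push Not at hge
      nlinarith
    nlinarith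
  · right
    refine ⟨ζ, ?_, ?_⟩
    · rintro h; rw [h] at heq; simp at heq
    · rw [heq, sub_self, mul_zero, Complex.ofReal_zero,
        Matrix.trace_conjTranspose_mul_self_eq_zero_iff, sub_eq_zero] at key
      intro x hx
      have := congrArg (fun A => Matrix.mulVec A x) key
      simp only [hM, ← Matrix.mulVec_mulVec, Matrix.smul_mulVec, h2 x hx] at this
      exact this

/-! ### Highest weight vectors and lattice words -/

attribute [local instance] LieRing.ofAssociativeRing

/-- The derivation action of a matrix `M ∈ 𝔤𝔩_n` on `(ℂ^n)^{⊗d}`. -/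
def glAct {n d : ℕ} (M : Matrix (Fin n) (Fin n) ℂ) : Module.End ℂ ((Fin d → Fin n) → ℂ) where
  toFun f := fun w => ∑ t, ∑ b, M (w t) b * f (Function.update w t b)
  map_add' f g := by
    funext w
    simp only [Pi.add_apply, mul_add, Finset.sum_add_distrib]
  map_smul' c f := by
    funext w
    simp only [Pi.smul_apply, smul_eq_mul, Finset.mul_sum, RingHom.id_apply]
    exact Finset.sum_congr rfl fun t _ => Finset.sum_congr rfl fun b _ => by ring

lemma glAct_apply {n d : ℕ} (M : Matrix (Fin n) (Fin n) ℂ) (f : (Fin d → Fin n) → ℂ)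
    (w : Fin d → Fin n) :
    glAct M f w = ∑ t, ∑ b, M (w t) b * f (Function.update w t b) := rfl

/-- The tensor whose components are those of `f` with first index `a`. -/
def slice {n d : ℕ} (f : (Fin (d + 1) → Fin n) → ℂ) (a : Fin n) : (Fin d → Fin n) → ℂ :=
  fun v => f (Fin.cons a v)

lemma glAct_cons {n d : ℕ} (M : Matrix (Fin n) (Fin n) ℂ) (f : (Fin (d + 1) → Fin n) → ℂ)
    (a : Fin n) (v : Fin d → Fin n) :
    glAct M f (Fin.cons a v) = ∑ b, M a b * slice f b v + glAct M (slice f a) v := by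
  rw [glAct_apply, Fin.sum_univ_succ]
  simp only [Fin.cons_zero, Fin.cons_succ, Fin.update_cons_zero, ← Fin.cons_update]
  rfl

lemma slice_glAct {n d : ℕ} (M : Matrix (Fin n) (Fin n) ℂ) (f : (Fin (d + 1) → Fin n) → ℂ)
    (a : Fin n) : slice (glAct M f) a = ∑ b, M a b • slice f b + glAct M (slice f a) := by
  funext v
  rw [slice, glAct_cons]
  simp

lemma ext_cons {n d : ℕ} {f g : (Fin (d + 1) → Fin n) → ℂ} (h : ∀ a, slice f a = slice g a) :
    f = g := by
  funext w
  have := congrFun (h (w 0)) (Fin.tail w)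
  simpa [slice, Fin.cons_self_tail] using this

/-- `glAct` is a representation of the Lie algebra `𝔤𝔩_n`. The induction on `d` splits off the first
tensor factor. -/
lemma glAct_comm {n d : ℕ} (M N : Matrix (Fin n) (Fin n) ℂ) (f : (Fin d → Fin n) → ℂ) :
    glAct M (glAct N f) - glAct N (glAct M f) = glAct (M * N - N * M) f := by
  induction d with
  | zero => funext w; simp [glAct_apply]
  | succ d ih =>
    refine ext_cons fun a => ?_
    have hs : ∀ f g : (Fin (d + 1) → Fin n) → ℂ, slice (f - g) a = slice f a - slice g a :=
      fun _ _ => rfl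
    rw [hs]
    simp only [slice_glAct, map_add, map_sum, map_smul, ← ih, Matrix.sub_apply, Matrix.mul_apply,
      smul_add, Finset.sum_add_distrib, sub_smul, Finset.sum_sub_distrib, Finset.sum_smul,
      Finset.smul_sum, smul_smul]
    rw [Finset.sum_comm (f := fun x x_1 => (M a x * N x x_1) • slice f x_1),
      Finset.sum_comm (f := fun x x_1 => (N a x * M x x_1) • slice f x_1)]
    abel

lemma glAct_add {n d : ℕ} (M N : Matrix (Fin n) (Fin n) ℂ) :
    (glAct (M + N) : Module.End ℂ ((Fin d → Fin n) → ℂ)) = glAct M + glAct N := by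
  refine LinearMap.ext fun f => ?_
  funext w
  simp [glAct_apply, add_mul, Finset.sum_add_distrib]

lemma glAct_smul {n d : ℕ} (c : ℂ) (M : Matrix (Fin n) (Fin n) ℂ) :
    (glAct (c • M) : Module.End ℂ ((Fin d → Fin n) → ℂ)) = c • glAct M := by
  refine LinearMap.ext fun f => ?_
  funext w
  simp [glAct_apply, Finset.mul_sum, mul_assoc]

lemma glAct_sub {n d : ℕ} (M N : Matrix (Fin n) (Fin n) ℂ) :
    (glAct (M - N) : Module.End ℂ ((Fin d → Fin n) → ℂ)) = glAct M - glAct N := by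
  refine LinearMap.ext fun f => ?_
  funext w
  simp [glAct_apply, sub_mul, Finset.sum_sub_distrib]

/-- `sc w s i` is the number of occurrences of the letter `i` in `w` at positions `≥ s`. -/
def sc {n d : ℕ} (w : Fin d → Fin n) (s : ℕ) (i : Fin n) : ℕ :=
  ∑ t : Fin d, if s ≤ (t : ℕ) ∧ w t = i then 1 else 0

lemma sc_cons_succ {n d : ℕ} (a : Fin n) (v : Fin d → Fin n) (s : ℕ) (i : Fin n) :
    sc (Fin.cons a v : Fin (d + 1) → Fin n) (s + 1) i = sc v s i := by
  rw [sc, sc, Fin.sum_univ_succ]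
  simp only [Fin.cons_zero, Fin.cons_succ, Fin.val_zero, Fin.val_succ, Nat.add_le_add_iff_right]
  simp

lemma sc_cons_zero {n d : ℕ} (a : Fin n) (v : Fin d → Fin n) (i : Fin n) :
    sc (Fin.cons a v : Fin (d + 1) → Fin n) 0 i = (if a = i then 1 else 0) + sc v 0 i := by
  rw [sc, sc, Fin.sum_univ_succ]
  simp only [Fin.cons_zero, Fin.cons_succ, Nat.zero_le, true_and]

lemma sum_sc {n d : ℕ} (w : Fin d → Fin n) : ∑ i, sc w 0 i = d := by
  simp only [sc, Nat.zero_le, true_and]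
  rw [Finset.sum_comm]
  simp

lemma glAct_diag {n d : ℕ} (i : Fin n) (f : (Fin d → Fin n) → ℂ) (w : Fin d → Fin n) :
    glAct (Matrix.single i i 1) f w = (sc w 0 i : ℂ) * f w := by
  simp only [glAct_apply, Matrix.single_apply, sc, Nat.zero_le, true_and]
  push_cast
  rw [Finset.sum_mul]
  refine Finset.sum_congr rfl fun t _ => ?_
  by_cases h : w t = i
  · subst h
    simp
  · have h' : ¬ (i = w t) := fun e => h e.symm
    simp [h, h']

lemma glMat_cons {n d : ℕ} (g : Matrix (Fin n) (Fin n) ℂ) (f : (Fin (d + 1) → Fin n) → ℂ)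
    (a : Fin n) (v : Fin d → Fin n) :
    (glMat (d + 1) g).mulVec f (Fin.cons a v) = ∑ b, g a b * (glMat d g).mulVec (slice f b) v := by
  simp only [glMat, tmat, Matrix.mulVec, dotProduct, Matrix.of_apply, Finset.mul_sum]
  rw [← Fintype.sum_prod_type']
  refine (Fintype.sum_equiv (Fin.consEquiv fun _ => Fin n) _ _ fun q => ?_).symm
  rw [Fin.prod_univ_succ]
  simp [Fin.consEquiv, slice, mul_assoc]

/-- The derivation action is the derivative of the group action at the identity. -/
lemma hasDerivAt_glMat {n d : ℕ} (M : Matrix (Fin n) (Fin n) ℂ) (f : (Fin d → Fin n) → ℂ)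
    (w : Fin d → Fin n) :
    HasDerivAt (fun s : ℂ => (glMat d (1 + s • M)).mulVec f w) (glAct M f w) 0 := by
  induction d with
  | zero =>
    have : (fun s : ℂ => (glMat 0 (1 + s • M)).mulVec f w) =
        fun s : ℂ => (glMat 0 1).mulVec f w := by
      funext s
      simp [glMat, tmat, Matrix.mulVec, dotProduct]
    rw [this, glAct_apply, Finset.univ_eq_empty, Finset.sum_empty]
    exact hasDerivAt_const _ _
  | succ d ih =>
    rw [← Fin.cons_self_tail w]
    generalize w 0 = a
    generalize Fin.tail w = v
    simp only [glMat_cons, glAct_cons]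
    have h1 : ∀ b, HasDerivAt (fun s : ℂ => (1 + s • M) a b *
        (glMat d (1 + s • M)).mulVec (slice f b) v)
        (M a b * slice f b v + (1 : Matrix (Fin n) (Fin n) ℂ) a b * glAct M (slice f b) v) 0 := by
      intro b
      have h2 : HasDerivAt (fun s : ℂ => (1 + s • M) a b) (M a b) 0 := by
        have := ((hasDerivAt_id (0 : ℂ)).mul_const (M a b)).const_add
          ((1 : Matrix (Fin n) (Fin n) ℂ) a b)
        simpa using this
      have := h2.fun_mul (ih (slice f b) v)
      have e : (glMat d ((1 : Matrix (Fin n) (Fin n) ℂ) + (0 : ℂ) • M)).mulVec (slice f b) v =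
          slice f b v := by
        simp [glMat, tmat_one]
      rw [e] at this
      simpa using this
    have h3 := HasDerivAt.fun_sum (u := Finset.univ) fun b _ => h1 b
    refine h3.congr_deriv ?_
    rw [Finset.sum_add_distrib]
    simp [Matrix.one_apply]

/-- An `SL`-invariant is killed by the off-diagonal matrix units, by differentiating its invariance
under transvections. -/
lemma glAct_single_slInv {n d : ℕ} {f : (Fin d → Fin n) → ℂ} (hf : f ∈ slInv n d)
    {i j : Fin n} (hij : i ≠ j) : glAct (Matrix.single i j 1) f = 0 := by
  funext w
  have h := hasDerivAt_glMat (Matrix.single i j 1) f w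
  have e : (fun s : ℂ => (glMat d (1 + s • Matrix.single i j 1)).mulVec f w) = fun _ => f w := by
    funext s
    have := congrFun (hf ⟨Matrix.transvection i j s, Matrix.det_transvection_of_ne i j hij s⟩) w
    simpa [Matrix.transvection, Matrix.smul_single] using this
  rw [e] at h
  exact h.unique (hasDerivAt_const _ _)

lemma glAct_lie_single {n d : ℕ} (i j : Fin n) :
    ⁅(glAct (Matrix.single i j 1) : Module.End ℂ ((Fin d → Fin n) → ℂ)),
      (glAct (Matrix.single j i 1) : Module.End ℂ ((Fin d → Fin n) → ℂ))⁆ =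
      glAct (Matrix.single i i 1 - Matrix.single j j 1) := by
  refine LinearMap.ext fun f => ?_
  have := glAct_comm (Matrix.single i j 1) (Matrix.single j i 1) f
  simpa [LieRing.of_associative_ring_bracket] using this

/-- All letters occur equally often in the words supporting an `SL`-invariant. -/
lemma sc_eq_of_slInv {n d : ℕ} {f : (Fin d → Fin n) → ℂ} (hf : f ∈ slInv n d)
    {w : Fin d → Fin n} (hw : f w ≠ 0) (i j : Fin n) : sc w 0 i = sc w 0 j := by
  by_cases hij : i = j
  · rw [hij]
  have h := congrFun (LinearMap.congr_fun (glAct_lie_single (d := d) i j) f) w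
  rw [LieRing.of_associative_ring_bracket, glAct_sub] at h
  simp only [LinearMap.sub_apply, Module.End.mul_apply, glAct_single_slInv hf hij,
    glAct_single_slInv hf (Ne.symm hij), map_zero, sub_zero, Pi.sub_apply, glAct_diag,
    Pi.zero_apply] at h
  rw [← sub_mul, eq_comm, mul_eq_zero, or_iff_left hw, sub_eq_zero] at h
  exact_mod_cast h

/-- A nonzero weight vector killed by the raising operator `E_{ij}` has weight `λ i ≥ λ j`. -/
lemma weight_dominant {n d : ℕ} {f : (Fin d → Fin n) → ℂ} (hf0 : f ≠ 0) {i j : Fin n}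
    (hij : i ≠ j) (l : Fin n → ℕ) (hw : ∀ w, f w ≠ 0 → ∀ i, sc w 0 i = l i)
    (hf : glAct (Matrix.single i j 1) f = 0) : l j ≤ l i := by
  set e : Module.End ℂ ((Fin d → Fin n) → ℂ) := glAct (Matrix.single i j 1) with he
  set g : Module.End ℂ ((Fin d → Fin n) → ℂ) := glAct (Matrix.single j i 1) with hg
  set h : Module.End ℂ ((Fin d → Fin n) → ℂ) :=
    glAct (Matrix.single i i 1 - Matrix.single j j 1) with hh
  have hhf : h f = ((l i : ℂ) - l j) • f := by
    funext w
    rw [hh, glAct_sub, LinearMap.sub_apply, Pi.sub_apply, glAct_diag, glAct_diag, ← sub_mul,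
      Pi.smul_apply, smul_eq_mul]
    by_cases hz : f w = 0
    · rw [hz]; ring
    · rw [hw w hz, hw w hz]
  by_contra hlt
  have hne : (l i : ℂ) - l j ≠ 0 := by
    rw [sub_ne_zero]
    exact_mod_cast (by omega : l i ≠ l j)
  -- `f` is a primitive vector of the triple `(h, e, g)`, so its weight is a natural number.
  have triple : IsSl2Triple h e g := by
    refine ⟨?_, glAct_lie_single i j, ?_, ?_⟩
    · intro h0
      rw [h0, LinearMap.zero_apply, eq_comm, smul_eq_zero] at hhf
      exact hhf.elim hne hf0
    · refine LinearMap.ext fun x => ?_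
      have := glAct_comm (Matrix.single i i 1 - Matrix.single j j 1) (Matrix.single i j 1) x
      rw [LieRing.of_associative_ring_bracket]
      refine this.trans ?_
      have e2 : (Matrix.single i i 1 - Matrix.single j j 1) * Matrix.single i j (1 : ℂ) -
          Matrix.single i j 1 * (Matrix.single i i 1 - Matrix.single j j 1) =
          (2 : ℂ) • Matrix.single i j 1 := by
        simp [sub_mul, mul_sub, hij.symm, two_smul]
      rw [e2, glAct_smul, he, ← Nat.cast_smul_eq_nsmul ℂ]
      rfl
    · refine LinearMap.ext fun x => ?_
      have := glAct_comm (Matrix.single i i 1 - Matrix.single j j 1) (Matrix.single j i 1) x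
      rw [LieRing.of_associative_ring_bracket]
      refine this.trans ?_
      have e2 : (Matrix.single i i 1 - Matrix.single j j 1) * Matrix.single j i (1 : ℂ) -
          Matrix.single j i 1 * (Matrix.single i i 1 - Matrix.single j j 1) =
          (-2 : ℂ) • Matrix.single j i 1 := by
        simp only [sub_mul, mul_sub, Matrix.single_mul_single_same, mul_one, ne_eq, hij,
          not_false_eq_true, Matrix.single_mul_single_of_ne]
        module
      rw [e2, glAct_smul, hg, ← Nat.cast_smul_eq_nsmul ℂ, ← neg_smul]
      rfl
  have prim : triple.HasPrimitiveVectorWith f ((l i : ℂ) - l j) := ⟨hf0, hhf, hf⟩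
  obtain ⟨N, hN⟩ := prim.exists_nat
  have : (l i : ℂ) = ((N + l j : ℕ) : ℂ) := by push_cast; linear_combination hN
  have := Nat.cast_injective this
  omega

/-- Reverse lattice words: in every suffix, a larger letter occurs at least as often as a
smaller one. -/
def IsLattice {n d : ℕ} (w : Fin d → Fin n) : Prop := ∀ s, Monotone (sc w s)

lemma isLattice_cons {n d : ℕ} (a : Fin n) (v : Fin d → Fin n) :
    IsLattice (Fin.cons a v : Fin (d + 1) → Fin n) ↔
      IsLattice v ∧ Monotone (sc (Fin.cons a v : Fin (d + 1) → Fin n) 0) := by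
  have e : ∀ s, sc (Fin.cons a v : Fin (d + 1) → Fin n) (s + 1) = sc v s :=
    fun s => funext fun i => sc_cons_succ a v s i
  constructor
  · intro h
    exact ⟨fun s => e s ▸ h (s + 1), h 0⟩
  · rintro ⟨h1, h2⟩ (_ | s)
    · exact h2
    · rw [e]; exact h1 s

/-- A highest weight vector (for the Borel subalgebra of lower triangular matrices) vanishing on
all reverse lattice words is zero. -/
lemma eq_zero_of_lattice {n d : ℕ} (f : (Fin d → Fin n) → ℂ) (l : Fin n → ℕ)
    (hw : ∀ w, f w ≠ 0 → ∀ i, sc w 0 i = l i)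
    (hf : ∀ i j : Fin n, j < i → glAct (Matrix.single i j 1) f = 0)
    (hL : ∀ w, IsLattice w → f w = 0) : f = 0 := by
  induction d generalizing l with
  | zero =>
    funext w
    exact hL w fun s i j _ => by simp [sc]
  | succ d ih =>
    by_contra hf0
    have hmono : Monotone l := by
      intro i j hij
      rcases hij.eq_or_lt with rfl | hlt
      · exact le_rfl
      · exact weight_dominant hf0 hlt.ne' l hw (hf j i hlt)
    refine hf0 (ext_cons fun a => ?_)
    change slice f a = 0
    -- The first nonzero slice is itself a highest weight vector.
    induction a using WellFoundedLT.induction with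
    | _ a iha =>
      refine ih (slice f a) (fun i => l i - if a = i then 1 else 0) ?_ ?_ ?_
      · intro v hv i
        have := hw (Fin.cons a v) hv i
        rw [sc_cons_zero] at this
        omega
      · intro i j hij
        have h := slice_glAct (Matrix.single i j 1) f a
        rw [hf i j hij] at h
        have hz : ∑ b, (Matrix.single i j (1 : ℂ)) a b • slice f b = 0 := by
          refine Finset.sum_eq_zero fun b _ => ?_
          rw [Matrix.single_apply]
          split_ifs with hc
          · obtain ⟨rfl, rfl⟩ := hc
            rw [iha _ hij, smul_zero]
          · rw [zero_smul]
        rw [hz, zero_add] at h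
        exact h.symm
      · intro v hv
        by_contra hne
        refine hne (hL (Fin.cons a v) ((isLattice_cons a v).mpr ⟨hv, ?_⟩))
        intro i j hij
        rw [hw _ hne, hw _ hne]
        exact hmono hij

/-- An `SL`-invariant is determined by its values on the reverse lattice words in which all letters
occur equally often. -/
lemma eq_zero_of_slInv_lattice {n d : ℕ} {f : (Fin d → Fin n) → ℂ} (hf : f ∈ slInv n d)
    (hL : ∀ w, IsLattice w → (∀ i j, sc w 0 i = sc w 0 j) → f w = 0) : f = 0 := by
  by_contra h0
  obtain ⟨w, hw⟩ := Function.ne_iff.mp h0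
  refine h0 (eq_zero_of_lattice f (sc w 0) ?_ (fun i j hij => glAct_single_slInv hf hij.ne')
    fun v hv => ?_)
  · intro v hv i
    have h1 : n * sc v 0 i = d := by
      have := sum_sc v
      rw [Finset.sum_congr rfl fun j _ => sc_eq_of_slInv hf hv j i] at this
      simpa using this
    have h2 : n * sc w 0 i = d := by
      have := sum_sc w
      rw [Finset.sum_congr rfl fun j _ => sc_eq_of_slInv hf hw j i] at this
      simpa using this
    exact Nat.eq_of_mul_eq_mul_left (Fin.pos i) (h1.trans h2.symm)
  · by_contra hne
    exact hne (hL v hv fun i j => sc_eq_of_slInv hf hne i j)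

/-! ### Determinantal invariants -/

/-- The product over the blocks `c` of the `n × n` determinants whose `a`-th row is the tensor slot
`e.symm (c, a)`: the basic polynomial invariants of `SL(n,ℂ)` in `(ℂ^n)^{⊗d}`. -/
noncomputable def detTensor {n r d : ℕ} (e : Fin d ≃ Fin r × Fin n) : (Fin d → Fin n) → ℂ :=
  fun w => ∏ c, (Matrix.of fun a b : Fin n => if w (e.symm (c, a)) = b then (1 : ℂ) else 0).det

/-- The expansion of a determinant that is multilinear in all its rows at once. -/
lemma det_eq_sum_words {n : ℕ} (A : Matrix (Fin n) (Fin n) ℂ) :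
    ∑ u : Fin n → Fin n, (∏ a, A a (u a)) *
      (Matrix.of fun a b : Fin n => if u a = b then (1 : ℂ) else 0).det = A.det := by
  have hA : A = fun a => ∑ b, A a b • (fun b' => if b = b' then (1 : ℂ) else 0) := by
    funext a b'
    simp [Finset.sum_apply]
  conv_rhs => rw [hA]
  change _ = (Matrix.detRowAlternating (R := ℂ) (n := Fin n)).toMultilinearMap _
  rw [MultilinearMap.map_sum]
  refine Finset.sum_congr rfl fun u _ => ?_
  rw [MultilinearMap.map_smul_univ]
  rfl

lemma detTensor_mem_slInv {n r d : ℕ} (e : Fin d ≃ Fin r × Fin n) :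
    detTensor e ∈ slInv n d := by
  intro g
  funext w
  let E : (Fin r → Fin n → Fin n) ≃ (Fin d → Fin n) :=
    (Equiv.curry (Fin r) (Fin n) (Fin n)).symm.trans (e.symm.arrowCongr (Equiv.refl _))
  have hE : ∀ u t, E u t = u (e t).1 (e t).2 := fun u t => rfl
  simp only [Matrix.mulVec, dotProduct, glMat, tmat, Matrix.of_apply]
  rw [← E.sum_comp]
  have h1 : ∀ u : Fin r → Fin n → Fin n,
      (∏ t, (g : Matrix (Fin n) (Fin n) ℂ) (w t) (E u t)) * detTensor e (E u) =
      ∏ c, ((∏ a, (Matrix.of fun a b => (g : Matrix (Fin n) (Fin n) ℂ) (w (e.symm (c, a))) b) a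
        (u c a)) * (Matrix.of fun a b : Fin n => if u c a = b then (1 : ℂ) else 0).det) := by
    intro u
    rw [Finset.prod_mul_distrib, ← e.symm.prod_comp, Fintype.prod_prod_type]
    simp [detTensor, hE]
  rw [Finset.sum_congr rfl fun u _ => h1 u]
  have h2 := Finset.prod_univ_sum (fun _ : Fin r => (Finset.univ : Finset (Fin n → Fin n)))
    fun c u => (∏ a, (Matrix.of fun a b => (g : Matrix (Fin n) (Fin n) ℂ) (w (e.symm (c, a))) b) a
        (u a)) * (Matrix.of fun a b : Fin n => if u a = b then (1 : ℂ) else 0).det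
  rw [Fintype.piFinset_univ] at h2
  rw [← h2, detTensor]
  refine Finset.prod_congr rfl fun c _ => ?_
  rw [det_eq_sum_words]
  have h3 : (Matrix.of fun a b => (g : Matrix (Fin n) (Fin n) ℂ) (w (e.symm (c, a))) b) =
      (Matrix.of fun a b : Fin n => if w (e.symm (c, a)) = b then (1 : ℂ) else 0) *
        (g : Matrix (Fin n) (Fin n) ℂ) := by
    ext a b
    simp [Matrix.mul_apply]
  rw [h3, Matrix.det_mul, g.det_coe, mul_one]

/-- A product of block determinants is nonzero at `w` exactly when no letter is repeated within a
block of `w`. -/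
lemma detTensor_ne_zero_iff {n r d : ℕ} (e : Fin d ≃ Fin r × Fin n) (w : Fin d → Fin n) :
    detTensor e w ≠ 0 ↔ ∀ c, Function.Injective fun a => w (e.symm (c, a)) := by
  rw [detTensor, Finset.prod_ne_zero_iff]
  refine ⟨fun h c a a' haa => ?_, fun h c _ => ?_⟩
  · by_contra hne
    refine h c (Finset.mem_univ c) (Matrix.det_zero_of_row_eq hne ?_)
    funext b
    have : w (e.symm (c, a)) = w (e.symm (c, a')) := haa
    simp [this]
  · let σ : Equiv.Perm (Fin n) := Equiv.ofBijective _ (Finite.injective_iff_bijective.mp (h c))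
    have : (Matrix.of fun a b : Fin n => if w (e.symm (c, a)) = b then (1 : ℂ) else 0) =
        (1 : Matrix (Fin n) (Fin n) ℂ).submatrix σ id := by
      ext a b
      simp [Matrix.one_apply, σ]
    rw [this, Matrix.det_permute, Matrix.det_one, mul_one]
    exact_mod_cast (Equiv.Perm.sign σ).ne_zero

lemma sc_anti {n d : ℕ} (w : Fin d → Fin n) {s s' : ℕ} (h : s ≤ s') (i : Fin n) :
    sc w s' i ≤ sc w s i := by
  refine Finset.sum_le_sum fun t _ => ?_
  by_cases h1 : s' ≤ (t : ℕ) ∧ w t = i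
  · rw [if_pos h1, if_pos ⟨h.trans h1.1, h1.2⟩]
  · rw [if_neg h1]; exact Nat.zero_le _

lemma sc_step {n d : ℕ} (w : Fin d → Fin n) (t : Fin d) :
    sc w t (w t) = sc w (t + 1) (w t) + 1 := by
  have h : ∀ x : Fin d, (if (t : ℕ) ≤ x ∧ w x = w t then 1 else 0) =
      (if (t : ℕ) + 1 ≤ x ∧ w x = w t then 1 else 0) + if x = t then 1 else 0 := by
    intro x
    rcases eq_or_ne x t with rfl | hne
    · simp
    · have : (t : ℕ) ≤ x ↔ (t : ℕ) + 1 ≤ x := by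
        have := Fin.val_ne_of_ne hne
        omega
      simp [hne, this]
  rw [sc, sc, Finset.sum_congr rfl fun x _ => h x, Finset.sum_add_distrib]
  simp

/-- The standard filling attached to a word `w` in which every letter occurs `r` times: a position
`t` goes to the block counting the occurrences of the letter `w t` to its right. -/
noncomputable def wordEquiv {n r d : ℕ} (hd : d = r * n) (w : Fin d → Fin n)
    (hw : ∀ i, sc w 0 i = r) : Fin d ≃ Fin r × Fin n :=
  Equiv.ofBijective
    (fun t => (⟨sc w (t + 1) (w t), by
      have := sc_step w t
      have := sc_anti w (Nat.zero_le t) (w t)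
      have := hw (w t)
      omega⟩, w t)) <| by
    rw [Fintype.bijective_iff_injective_and_card]
    refine ⟨fun t t' h => ?_, by simp [hd]⟩
    obtain ⟨h1, h2⟩ := Prod.ext_iff.mp h
    replace h1 : sc w (t + 1) (w t) = sc w (t' + 1) (w t') := congrArg Fin.val h1
    replace h2 : w t = w t' := h2
    by_contra hne
    have key : ∀ x y : Fin d, x < y → w x = w y → sc w (y + 1) (w y) < sc w (x + 1) (w x) := by
      intro x y hxy e
      have a := sc_step w y
      have b := sc_anti w (Nat.succ_le_of_lt (Fin.lt_def.mp hxy)) (w y)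
      rw [e]
      simp only [Nat.succ_eq_add_one] at b
      omega
    rcases lt_or_gt_of_ne hne with hlt | hlt
    · have := key _ _ hlt h2
      omega
    · have := key _ _ hlt h2.symm
      omega

lemma wordEquiv_fst {n r d : ℕ} (hd : d = r * n) (w : Fin d → Fin n)
    (hw : ∀ i, sc w 0 i = r) (t : Fin d) :
    ((wordEquiv hd w hw t).1 : ℕ) = sc w (t + 1) (w t) := rfl

lemma wordEquiv_snd {n r d : ℕ} (hd : d = r * n) (w : Fin d → Fin n)
    (hw : ∀ i, sc w 0 i = r) (t : Fin d) : (wordEquiv hd w hw t).2 = w t := rfl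

lemma detTensor_wordEquiv_self {n r d : ℕ} (hd : d = r * n) (w : Fin d → Fin n)
    (hw : ∀ i, sc w 0 i = r) : detTensor (wordEquiv hd w hw) w ≠ 0 := by
  rw [detTensor_ne_zero_iff]
  intro c a a' h
  simpa only [← wordEquiv_snd hd w hw, Equiv.apply_symm_apply] using h

/-- Triangularity: the invariant attached to a lattice word `w` is supported on `w` and on words `v`
that precede `w` in the colexicographic order. -/
lemma detTensor_wordEquiv_lt {n r d : ℕ} (hd : d = r * n) (w : Fin d → Fin n)
    (hw : ∀ i, sc w 0 i = r) (hL : IsLattice w) (v : Fin d → Fin n)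
    (hv : detTensor (wordEquiv hd w hw) v ≠ 0) (t : Fin d) (ht : v t ≠ w t)
    (heq : ∀ t', t < t' → v t' = w t') : v t < w t := by
  rw [detTensor_ne_zero_iff] at hv
  by_contra hlt
  have hgt : w t < v t := lt_of_le_of_ne (not_lt.mp hlt) (Ne.symm ht)
  set e := wordEquiv hd w hw with he
  -- `x` is the position of the letter `v t` in the block of `t`; it lies to the right of `t`.
  set x := e.symm ((e t).1, v t) with hx
  have hex : e x = ((e t).1, v t) := e.apply_symm_apply _
  have hwx : w x = v t := by rw [← wordEquiv_snd hd w hw x, ← he, hex]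
  have hne : x ≠ t := by
    intro h
    rw [h] at hwx
    exact ht hwx.symm
  have htx : t < x := by
    by_contra hle
    have hxt : x < t := lt_of_le_of_ne (not_lt.mp hle) hne
    have h1 : sc w (x + 1) (w x) = sc w (t + 1) (w t) := by
      rw [← wordEquiv_fst hd w hw x, ← wordEquiv_fst hd w hw t, ← he, hex]
    have h2 := sc_anti w (Nat.succ_le_of_lt (Fin.lt_def.mp hxt)) (w x)
    have h3 := hL t hgt.le
    have h4 := sc_step w t
    rw [hwx] at h1 h2
    simp only [Nat.succ_eq_add_one] at h2
    omega
  have het : e.symm ((e t).1, w t) = t := by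
    rw [← wordEquiv_snd hd w hw t, ← he]
    exact e.symm_apply_apply t
  refine ht (hv (e t).1 ?_)
  change v x = v (e.symm ((e t).1, w t))
  rw [het, heq x htx, hwx]

/-- Reverse lattice words of length `d` with content `l`. Read from right to left, such a word lists
the rows of the successive boxes of a standard Young tableau with row lengths `l`. -/
def LatWord (n d : ℕ) (l : Fin n → ℕ) : Type :=
  {w : Fin d → Fin n // IsLattice w ∧ ∀ i, sc w 0 i = l i}

instance (n d : ℕ) (l : Fin n → ℕ) : Finite (LatWord n d l) :=
  inferInstanceAs (Finite {w : Fin d → Fin n // IsLattice w ∧ ∀ i, sc w 0 i = l i})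

/-- The number of lattice words with content `(r, …, r)` is the dimension of the space of
`SL`-invariants in `(ℂ^n)^{⊗d}`. -/
lemma finrank_slInv_eq_card {n r d : ℕ} (hd : d = r * n) :
    Module.finrank ℂ (slInv n d) = Nat.card (LatWord n d fun _ => r) := by
  classical
  have := Fintype.ofFinite (LatWord n d fun _ => r)
  rw [Nat.card_eq_fintype_card]
  apply le_antisymm
  · let R : slInv n d →ₗ[ℂ] (LatWord n d fun _ => r) → ℂ :=
      { toFun := fun f w => f.1 w.1
        map_add' := fun _ _ => rfl
        map_smul' := fun _ _ => rfl }
    have hR : Function.Injective R := by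
      rw [injective_iff_map_eq_zero]
      intro f hf
      refine Subtype.ext (eq_zero_of_slInv_lattice f.2 fun w hw hc => ?_)
      refine congrFun hf ⟨w, hw, fun i => ?_⟩
      have h := sum_sc w
      rw [Finset.sum_congr rfl fun j _ => hc j i] at h
      simp only [Finset.sum_const, Finset.card_univ, Fintype.card_fin, smul_eq_mul] at h
      exact Nat.eq_of_mul_eq_mul_left (Fin.pos i) (h.trans (hd.trans (mul_comm r n)))
    have := LinearMap.finrank_le_finrank_of_injective hR
    rwa [Module.finrank_fintype_fun_eq_card] at this
  · have hli : LinearIndependent ℂ fun w : LatWord n d (fun _ => r) =>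
        detTensor (wordEquiv hd w.1 w.2.2) := by
      rw [Fintype.linearIndependent_iff]
      intro c hc
      by_contra! hne
      obtain ⟨w0, hw0⟩ := hne
      obtain ⟨w, hw, hmax⟩ := Finset.exists_max_image (Finset.univ.filter fun w => c w ≠ 0)
        (fun w => toColex w.1) ⟨w0, by simpa using hw0⟩
      have h := congrFun hc w.1
      rw [Finset.sum_apply, Finset.sum_eq_single w] at h
      · have h' := detTensor_wordEquiv_self hd w.1 w.2.2
        simp only [Finset.mem_filter, Finset.mem_univ, true_and] at hw
        exact mul_ne_zero hw h' h
      · intro w' _ hw'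
        by_contra h0
        rw [Pi.smul_apply, smul_eq_mul, ← ne_eq, mul_ne_zero_iff] at h0
        have hle := hmax w' (by simpa using h0.1)
        have hlt : toColex w'.1 < toColex w.1 :=
          lt_of_le_of_ne hle fun h => hw' (Subtype.ext (toColex.injective h))
        obtain ⟨t, ht1, ht2⟩ := hlt
        exact absurd (detTensor_wordEquiv_lt hd w'.1 w'.2.2 w'.2.1 w.1 h0.2 t ht2.ne'
          fun t' ht' => (ht1 t' ht').symm) (not_lt.mpr ht2.le)
      · intro h; exact absurd (Finset.mem_univ w) h
    have hli' : LinearIndependent ℂ fun w : LatWord n d (fun _ => r) =>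
        (⟨detTensor (wordEquiv hd w.1 w.2.2), detTensor_mem_slInv _⟩ : slInv n d) :=
      LinearIndependent.of_comp (slInv n d).subtype hli
    exact hli'.fintype_card_le_finrank

/-! ### The hook length formula -/

/-- `x · (x-1)(x-2)⋯(x-j) = (x-j) · x(x-1)⋯(x-j+1)`. -/
lemma descPochhammer_shift (j : ℕ) (x : ℝ) :
    x * (descPochhammer ℝ j).eval (x - 1) = (x - j) * (descPochhammer ℝ j).eval x := by
  have h1 := descPochhammer_succ_eval (S := ℝ) j x
  rw [descPochhammer_succ_left, Polynomial.eval_mul, Polynomial.eval_X, Polynomial.eval_comp] at h1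
  simp only [Polynomial.eval_sub, Polynomial.eval_X, Polynomial.eval_one] at h1
  linarith

lemma det_vandermonde_eq_descPochhammer {n : ℕ} (x : Fin n → ℝ) :
    (Matrix.vandermonde x).det =
      (Matrix.of fun i j : Fin n => (descPochhammer ℝ j).eval (x i)).det :=
  Matrix.det_eval_matrixOfPolynomials_eq_det_vandermonde x (fun j => descPochhammer ℝ j)
    (fun j => descPochhammer_natDegree ℝ j) (fun j => monic_descPochhammer ℝ j)

/-- The identity that makes the hook length formula compatible with removing a box. In the basis of
falling factorials it holds for each term of the Leibniz expansion separately, by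
`descPochhammer_shift`. -/
lemma sum_mul_det_vandermonde_sub {n : ℕ} (x : Fin n → ℝ) :
    ∑ a, x a * (Matrix.vandermonde (x - Pi.single a 1 : Fin n → ℝ)).det =
      (∑ i, (x i - i)) * (Matrix.vandermonde x).det := by
  simp only [det_vandermonde_eq_descPochhammer]
  simp only [Matrix.det_apply', Matrix.of_apply, Finset.mul_sum]
  rw [Finset.sum_comm]
  refine Finset.sum_congr rfl fun σ _ => ?_
  have h : ∀ m, x (σ m) * ((Equiv.Perm.sign σ : ℤ) : ℝ) *
      ∏ j : Fin n, (descPochhammer ℝ j).eval ((x - Pi.single (σ m) 1 : Fin n → ℝ) (σ j)) =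
      (x (σ m) - m) * (((Equiv.Perm.sign σ : ℤ) : ℝ) *
        ∏ j : Fin n, (descPochhammer ℝ j).eval (x (σ j))) := by
    intro m
    rw [← Finset.mul_prod_erase _ _ (Finset.mem_univ m),
      ← Finset.mul_prod_erase _ (fun j : Fin n => (descPochhammer ℝ j).eval (x (σ j)))
        (Finset.mem_univ m)]
    have h1 : ∀ j ∈ (Finset.univ : Finset (Fin n)).erase m,
        (descPochhammer ℝ j).eval ((x - Pi.single (σ m) 1 : Fin n → ℝ) (σ j)) =
          (descPochhammer ℝ j).eval (x (σ j)) := by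
      intro j hj
      rw [Pi.sub_apply, Pi.single_eq_of_ne (σ.injective.ne (Finset.ne_of_mem_erase hj)), sub_zero]
    rw [Finset.prod_congr rfl h1, Pi.sub_apply, Pi.single_eq_same]
    linear_combination ((Equiv.Perm.sign σ : ℤ) : ℝ) *
      (∏ j ∈ Finset.univ.erase m, (descPochhammer ℝ j).eval (x (σ j))) *
        descPochhammer_shift m (x (σ m))
  rw [← Equiv.sum_comp σ]
  simp only [← mul_assoc]
  rw [Finset.sum_congr rfl fun m _ => h m, ← Finset.sum_mul, mul_assoc]
  congr 1
  rw [Finset.sum_sub_distrib, Finset.sum_sub_distrib, Equiv.sum_comp σ x]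

lemma card_latWord_of_not_monotone {n d : ℕ} {l : Fin n → ℕ} (hl : ¬ Monotone l) :
    Nat.card (LatWord n d l) = 0 := by
  have : IsEmpty (LatWord n d l) := ⟨fun w => hl fun i j hij => by
    rw [← w.2.2 i, ← w.2.2 j]
    exact w.2.1 0 hij⟩
  exact Nat.card_of_isEmpty

/-- Removing the first letter of a lattice word. -/
lemma card_latWord_succ {n d : ℕ} {l : Fin n → ℕ} (hl : Monotone l) :
    Nat.card (LatWord n (d + 1) l) =
      ∑ a, if 1 ≤ l a then Nat.card (LatWord n d (l - Pi.single a 1)) else 0 := by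
  have hiff : ∀ (a : Fin n) (v : Fin d → Fin n), 1 ≤ l a →
      ((IsLattice (Fin.cons a v : Fin (d + 1) → Fin n) ∧
        ∀ i, sc (Fin.cons a v : Fin (d + 1) → Fin n) 0 i = l i) ↔
      (IsLattice v ∧ ∀ i, sc v 0 i = (l - Pi.single a 1 : Fin n → ℕ) i)) := by
    intro a v ha
    have hc : (∀ i, sc (Fin.cons a v : Fin (d + 1) → Fin n) 0 i = l i) ↔
        ∀ i, sc v 0 i = (l - Pi.single a 1 : Fin n → ℕ) i := by
      refine forall_congr' fun i => ?_
      rw [sc_cons_zero, Pi.sub_apply]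
      rcases eq_or_ne a i with rfl | h
      · rw [if_pos rfl, Pi.single_eq_same]; omega
      · rw [if_neg h, Pi.single_eq_of_ne' h]; omega
    rw [hc, isLattice_cons]
    refine ⟨fun h => ⟨h.1.1, h.2⟩, fun h => ⟨⟨h.1, ?_⟩, h.2⟩⟩
    rwa [funext (hc.mpr h.2)]
  have hpos : ∀ (a : Fin n) (v : Fin d → Fin n),
      (∀ i, sc (Fin.cons a v : Fin (d + 1) → Fin n) 0 i = l i) → 1 ≤ l a := by
    intro a v h
    rw [← h a, sc_cons_zero, if_pos rfl]
    omega
  let e : LatWord n (d + 1) l ≃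
      Σ a : Fin n, {v : LatWord n d (l - Pi.single a 1) // 1 ≤ l a} :=
    { toFun := fun w =>
        have hw : IsLattice (Fin.cons (w.1 0) (Fin.tail w.1) : Fin (d + 1) → Fin n) ∧
            ∀ i, sc (Fin.cons (w.1 0) (Fin.tail w.1) : Fin (d + 1) → Fin n) 0 i = l i := by
          rw [Fin.cons_self_tail]; exact w.2
        ⟨w.1 0, ⟨⟨Fin.tail w.1, (hiff _ _ (hpos _ _ hw.2)).mp hw⟩, hpos _ _ hw.2⟩⟩
      invFun := fun x => ⟨Fin.cons x.1 x.2.1.1, (hiff _ _ x.2.2).mpr x.2.1.2⟩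
      left_inv := fun w => Subtype.ext (Fin.cons_self_tail w.1)
      right_inv := fun x => rfl }
  rw [Nat.card_congr e, Nat.card_sigma]
  refine Finset.sum_congr rfl fun a _ => ?_
  split_ifs with h
  · exact Nat.card_congr (Equiv.subtypeUnivEquiv fun _ => h)
  · have : IsEmpty {v : LatWord n d (l - Pi.single a 1) // 1 ≤ l a} := ⟨fun x => h x.2⟩
    exact Nat.card_of_isEmpty

lemma det_vandermonde_eq_zero {n : ℕ} {x : Fin n → ℝ} {i j : Fin n} (hij : i ≠ j)
    (h : x i = x j) : (Matrix.vandermonde x).det = 0 :=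
  Matrix.det_zero_of_row_eq hij (by funext m; simp [Matrix.vandermonde_apply, h])

lemma det_vandermonde_range (n r : ℕ) :
    (Matrix.vandermonde fun i : Fin n => ((r : ℝ) + (i : ℕ))).det =
      ∏ m ∈ Finset.range n, (Nat.factorial m : ℝ) := by
  have h := Matrix.det_vandermonde_add (fun i : Fin n => ((i : ℕ) : ℝ)) (r : ℝ)
  have e : (fun i : Fin n => (r : ℝ) + ((i : ℕ) : ℝ)) = fun i : Fin n => ((i : ℕ) : ℝ) + r :=
    funext fun i => add_comm _ _
  rw [e, h]
  cases n with
  | zero => simp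
  | succ n =>
    rw [Matrix.det_vandermonde_id_eq_superFactorial, ← Nat.prod_range_succ_factorial]
    push_cast
    rfl

/-- The Frobenius form of the hook length formula. -/
lemma card_latWord_mul {n d : ℕ} (l : Fin n → ℕ) (hl : Monotone l) (hd : ∑ i, l i = d) :
    (Nat.card (LatWord n d l) : ℝ) * ∏ i, (Nat.factorial (l i + i) : ℝ) =
      Nat.factorial d * (Matrix.vandermonde fun i => ((l i : ℝ) + (i : ℕ))).det := by
  induction d generalizing l with
  | zero =>
    have h0 : l = 0 := by
      funext i
      exact (Finset.sum_eq_zero_iff.mp hd) i (Finset.mem_univ i)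
    subst h0
    have : Unique (LatWord n 0 0) :=
      { default := ⟨Fin.elim0, fun s i j _ => by simp [sc], fun i => by simp [sc]⟩
        uniq := fun w => Subtype.ext (Subsingleton.elim _ _) }
    have hv := det_vandermonde_range n 0
    rw [Finset.prod_range] at hv
    simp only [Pi.zero_apply, Nat.card_unique]
    rw [hv]
    simp
  | succ d ih =>
    set x : Fin n → ℝ := fun i => (l i : ℝ) + (i : ℕ) with hx
    have key : ∀ a : Fin n,
        ((if 1 ≤ l a then Nat.card (LatWord n d (l - Pi.single a 1)) else 0 : ℕ) : ℝ) *
          ∏ i, (Nat.factorial (l i + i) : ℝ) =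
        Nat.factorial d * (x a * (Matrix.vandermonde (x - Pi.single a 1)).det) := by
      intro a
      -- If `a - 1` has the same multiplicity as `a`, two Vandermonde nodes collide.
      have hcoll : ∀ b : Fin n, (b : ℕ) + 1 = a → l b = l a →
          (Matrix.vandermonde (x - Pi.single a 1)).det = 0 := by
        intro b hb hba
        have hne : b ≠ a := by rintro rfl; omega
        refine det_vandermonde_eq_zero hne ?_
        rw [Pi.sub_apply, Pi.sub_apply, Pi.single_eq_same, Pi.single_eq_of_ne hne, hx]
        simp only
        rw [hba, ← hb]
        push_cast
        ring
      split_ifs with ha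
      · by_cases hm : Monotone (l - Pi.single a 1)
        · have hs : ∑ i, (l - Pi.single a 1 : Fin n → ℕ) i = d := by
            have h1 : ∀ i, l i =
                (l - Pi.single a 1 : Fin n → ℕ) i + (Pi.single a 1 : Fin n → ℕ) i := by
              intro i
              rw [Pi.sub_apply]
              rcases eq_or_ne i a with rfl | h
              · rw [Pi.single_eq_same]; omega
              · rw [Pi.single_eq_of_ne h]; omega
            rw [Finset.sum_congr rfl fun i _ => h1 i, Finset.sum_add_distrib,
              Finset.sum_pi_single'] at hd
            simpa using hd
          have h2 := ih _ hm hs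
          have h3 : (fun i : Fin n => (((l - Pi.single a 1 : Fin n → ℕ) i : ℕ) : ℝ) + (i : ℕ)) =
              x - Pi.single a 1 := by
            funext i
            rw [Pi.sub_apply, Pi.sub_apply, hx]
            rcases eq_or_ne i a with rfl | h
            · rw [Pi.single_eq_same, Pi.single_eq_same]
              push_cast [ha]
              ring
            · rw [Pi.single_eq_of_ne h, Pi.single_eq_of_ne h]
              simp
          have h4 : ∏ i, (Nat.factorial (l i + i) : ℝ) =
              x a * ∏ i, (Nat.factorial ((l - Pi.single a 1 : Fin n → ℕ) i + i) : ℝ) := by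
            have h6 := Finset.mul_prod_erase Finset.univ
              (fun i : Fin n => (Nat.factorial (l i + i) : ℝ)) (Finset.mem_univ a)
            have h7 := Finset.mul_prod_erase Finset.univ (fun i : Fin n =>
              (Nat.factorial ((l - Pi.single a 1 : Fin n → ℕ) i + i) : ℝ)) (Finset.mem_univ a)
            have h8 : ∀ i ∈ (Finset.univ : Finset (Fin n)).erase a,
                (Nat.factorial (l i + i) : ℝ) =
                  (Nat.factorial ((l - Pi.single a 1 : Fin n → ℕ) i + i) : ℝ) := by
              intro i hi
              rw [Pi.sub_apply, Pi.single_eq_of_ne (Finset.ne_of_mem_erase hi), Nat.sub_zero]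
            have h9 : (Nat.factorial (l a + a) : ℝ) =
                x a * (Nat.factorial ((l - Pi.single a 1 : Fin n → ℕ) a + a) : ℝ) := by
              rw [Pi.sub_apply, Pi.single_eq_same, hx]
              obtain ⟨m, hm⟩ := Nat.exists_eq_add_of_le ha
              have e1 : l a + (a : ℕ) = (m + a) + 1 := by omega
              have e2 : l a - 1 + (a : ℕ) = m + a := by omega
              have e3 : (l a : ℝ) + (a : ℕ) = (m : ℝ) + (a : ℕ) + 1 := by exact_mod_cast e1
              rw [e1, e2, Nat.factorial_succ]
              simp only [e3]
              push_cast
              ring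
            rw [← h6, Finset.prod_congr rfl h8, h9, mul_assoc]
            exact congrArg (x a * ·) h7
          rw [h3] at h2
          rw [h4]
          linear_combination x a * h2
        · rw [card_latWord_of_not_monotone hm]
          have : ∃ b : Fin n, (b : ℕ) + 1 = a ∧ l b = l a := by
            simp only [Monotone, not_forall, not_le] at hm
            obtain ⟨b, c, hbc, hlt⟩ := hm
            have h1 := hl hbc
            have hca : c = a := by
              by_contra h
              rw [Pi.sub_apply, Pi.sub_apply, Pi.single_eq_of_ne h] at hlt
              omega
            subst hca
            have hbc' : b ≠ c := by rintro rfl; exact lt_irrefl _ hlt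
            rw [Pi.sub_apply, Pi.sub_apply, Pi.single_eq_same, Pi.single_eq_of_ne hbc'] at hlt
            have hlt' : (b : ℕ) < c := lt_of_le_of_ne hbc (Fin.val_ne_of_ne hbc')
            let b' : Fin n := ⟨c - 1, by omega⟩
            have h2 : l b ≤ l b' := hl (Fin.le_def.mpr (by simp only [b']; omega))
            have h3 : l b' ≤ l c := hl (Fin.le_def.mpr (by simp only [b']; omega))
            exact ⟨b', by simp only [b']; omega, by omega⟩
          obtain ⟨b, hb, hba⟩ := this
          rw [hcoll b hb hba]
          simp
      · have hz : l a = 0 := by omega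
        by_cases h0 : (a : ℕ) = 0
        · have : x a = 0 := by simp [hx, hz, h0]
          rw [this]
          simp
        · let b : Fin n := ⟨a - 1, by omega⟩
          have hb : (b : ℕ) + 1 = a := by simp only [b]; omega
          have h1 : l b ≤ l a := hl (Fin.le_def.mpr (by omega))
          rw [hcoll b hb (by omega)]
          simp
    rw [card_latWord_succ hl]
    push_cast [Finset.sum_mul]
    have key' : ∀ a : Fin n, _ := key
    push_cast at key'
    rw [Finset.sum_congr rfl fun a _ => key' a, ← Finset.mul_sum, sum_mul_det_vandermonde_sub,
      Nat.factorial_succ]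
    have h5 : ∑ i, (x i - (i : ℕ)) = (d : ℝ) + 1 := by
      simp only [hx, add_sub_cancel_right]
      exact_mod_cast hd
    rw [h5]
    push_cast
    ring

/-- The dimension of the space of `SL`-invariants, by the hook length formula for the rectangle. -/
lemma finrank_slInv {n r d : ℕ} (hd : d = r * n) :
    (Module.finrank ℂ (slInv n d) : ℝ) = (Nat.factorial d : ℝ) *
      ∏ m ∈ Finset.range n, (Nat.factorial m : ℝ) / (Nat.factorial (m + r) : ℝ) := by
  rw [finrank_slInv_eq_card hd]
  have h := card_latWord_mul (n := n) (d := d) (fun _ => r) (fun _ _ _ => le_rfl)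
    (by simp [hd, mul_comm])
  rw [det_vandermonde_range] at h
  have h2 : ∏ i : Fin n, (Nat.factorial (r + i) : ℝ) =
      ∏ m ∈ Finset.range n, (Nat.factorial (m + r) : ℝ) := by
    rw [Finset.prod_range]
    exact Finset.prod_congr rfl fun i _ => by rw [add_comm]
  rw [h2] at h
  rw [Finset.prod_div_distrib, ← mul_div_assoc, ← h, mul_div_cancel_right₀]
  exact Finset.prod_ne_zero_iff.mpr fun m _ => Nat.cast_ne_zero.mpr (Nat.factorial_ne_zero _)

/-! ### Permutations acting as scalars -/

/-- A permutation acting on the invariants by a nonzero scalar maps blocks to blocks, for every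
division of the positions into blocks. -/
lemma block_of_scalar {n r d : ℕ} (e : Fin d ≃ Fin r × Fin n) {σ : Equiv.Perm (Fin d)} {ζ : ℂ}
    (hζ : ζ ≠ 0) (hσ : ∀ x ∈ slInv n d, (permMat n σ).mulVec x = ζ • x) {x y : Fin d}
    (hxy : x ≠ y) (h : (e x).1 = (e y).1) : (e (σ x)).1 = (e (σ y)).1 := by
  by_contra hne
  -- `w` is injective on every block and takes the same value at `σ x` and `σ y`.
  let w : Fin d → Fin n := fun t => if (e t).1 = (e (σ x)).1 then
    Equiv.swap (e (σ x)).2 (e (σ y)).2 (e t).2 else (e t).2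
  have hw : detTensor e w ≠ 0 := by
    rw [detTensor_ne_zero_iff]
    intro c a a' haa
    simp only [w, Equiv.apply_symm_apply] at haa
    split_ifs at haa with hc
    · exact (Equiv.swap _ _).injective haa
    · exact haa
  have hwσ : detTensor e (w ∘ σ) = 0 := by
    by_contra h0
    have h1 := (detTensor_ne_zero_iff e _).mp h0 (e x).1
    have h2 : (fun a => (w ∘ σ) (e.symm ((e x).1, a))) (e x).2 =
        (fun a => (w ∘ σ) (e.symm ((e x).1, a))) (e y).2 := by
      have e1 : e.symm ((e x).1, (e x).2) = x := e.symm_apply_apply x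
      have e2 : e.symm ((e x).1, (e y).2) = y := by rw [h]; exact e.symm_apply_apply y
      simp only [e1, e2, Function.comp_apply, w, if_true, Ne.symm hne, if_false,
        Equiv.swap_apply_left]
    exact hxy (e.injective (Prod.ext h (h1 h2)))
  have h3 := congrFun (hσ _ (detTensor_mem_slInv e)) w
  rw [permMat_mulVec, hwσ, Pi.smul_apply, smul_eq_mul, eq_comm, mul_eq_zero] at h3
  exact h3.elim hζ hw

/-- A partial matching of two finite types of the same size extends to a bijection. -/
lemma exists_equiv_extend {α β : Type*} [Fintype α] [Fintype β] [DecidableEq α] [DecidableEq β]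
    (hc : Fintype.card α = Fintype.card β) {m : ℕ} (p : Fin m → α) (q : Fin m → β)
    (hp : Function.Injective p) (hq : Function.Injective q) : ∃ e : α ≃ β, ∀ i, e (p i) = q i := by
  rcases isEmpty_or_nonempty β with hβ | ⟨⟨b⟩⟩
  · have := Fintype.card_eq_zero_iff.mp (hc.trans (Fintype.card_eq_zero_iff.mpr hβ))
    exact ⟨Equiv.equivOfIsEmpty α β, fun i => isEmptyElim (p i)⟩
  have hf : ∀ i, Function.extend p q (fun _ => b) (p i) = q i := fun i => hp.extend_apply _ _ _
  obtain ⟨g, hg⟩ := Finset.exists_equiv_extend_of_card_eq (t := (Finset.univ : Finset β))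
    (by rw [hc, Finset.card_univ]) (s := Finset.univ.image p)
    (f := Function.extend p q fun _ => b) (Finset.subset_univ _) (by
      intro x hx y hy hxy
      simp only [Finset.coe_image, Finset.coe_univ, Set.image_univ, Set.mem_range] at hx hy
      obtain ⟨i, rfl⟩ := hx
      obtain ⟨j, rfl⟩ := hy
      rw [hf, hf] at hxy
      rw [hq hxy])
  refine ⟨g.trans (Equiv.subtypeUnivEquiv fun _ => Finset.mem_univ _), fun i => ?_⟩
  exact (hg (p i) (Finset.mem_image_of_mem p (Finset.mem_univ i))).trans (hf i)

/-- If `σ` moves `x` out of the pair `{x, y}` but keeps `y` in it, then some division into blocks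
has `x, y` together and `σ x, σ y` apart, so `σ` does not act as a scalar. -/
lemma not_scalar_of_split {n r d : ℕ} (hn : 2 ≤ n) (hr : 2 ≤ r) (hd : d = r * n)
    {σ : Equiv.Perm (Fin d)} {x y : Fin d} (hxy : x ≠ y) (h1 : σ x ≠ x) (h2 : σ x ≠ y)
    (h3 : σ y = x ∨ σ y = y) {ζ : ℂ} (hζ : ζ ≠ 0)
    (hσ : ∀ f ∈ slInv n d, (permMat n σ).mulVec f = ζ • f) : False := by
  obtain ⟨e, he⟩ := exists_equiv_extend (α := Fin d) (β := Fin r × Fin n) (by simp [hd])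
    ![x, y, σ x] ![(⟨0, by omega⟩, ⟨0, by omega⟩), (⟨0, by omega⟩, ⟨1, by omega⟩),
      (⟨1, by omega⟩, ⟨0, by omega⟩)]
    (by intro i j; fin_cases i <;> fin_cases j <;> simp [hxy, hxy.symm, h1, h2, h1.symm, h2.symm])
    (by intro i j; fin_cases i <;> fin_cases j <;> simp)
  have e0 := he 0
  have e1 := he 1
  have e2 := he 2
  simp only [Matrix.cons_val] at e0 e1 e2
  have h := block_of_scalar e hζ hσ hxy (by rw [e0, e1])
  rcases h3 with h3 | h3
  · rw [e2, h3, e0] at h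
    simp at h
  · rw [e2, h3, e1] at h
    simp at h

/-- Outside the case `n = r = 2`, only the identity acts on the invariants as a scalar: there is
enough room to separate `σ x` from `σ y` while keeping `x` and `y` in one block. -/
lemma eq_one_of_scalar {n r d : ℕ} (hn : 2 ≤ n) (hr : 2 ≤ r) (hd : d = r * n)
    (hnr : 3 ≤ n ∨ 3 ≤ r) {σ : Equiv.Perm (Fin d)} {ζ : ℂ} (hζ : ζ ≠ 0)
    (hσ : ∀ f ∈ slInv n d, (permMat n σ).mulVec f = ζ • f) : σ = 1 := by
  by_contra hne
  obtain ⟨x, hx⟩ : ∃ x, σ x ≠ x := by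
    by_contra! h
    exact hne (Equiv.ext h)
  have hd3 : 2 < d := by nlinarith
  obtain ⟨y, hy⟩ : ∃ y, y ∉ ({x, σ x} : Finset (Fin d)) := by
    by_contra! h
    have h1 := Finset.card_le_card (fun y _ => h y : Finset.univ ⊆ ({x, σ x} : Finset (Fin d)))
    have h2 := Finset.card_le_two (a := x) (b := σ x)
    rw [Finset.card_univ, Fintype.card_fin] at h1
    omega
  simp only [Finset.mem_insert, Finset.mem_singleton, not_or] at hy
  obtain ⟨hyx, hyσ⟩ := hy
  by_cases h3 : σ y = x ∨ σ y = y
  · exact not_scalar_of_split hn hr hd (Ne.symm hyx) hx (Ne.symm hyσ) h3 hζ hσ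
  rw [not_or] at h3
  obtain ⟨h3, h4⟩ := h3
  have h5 : σ y ≠ σ x := σ.injective.ne hyx
  -- With `x, y` in the first block and `σ x` in the second, there is still room for `σ y` in a
  -- block other than the second.
  obtain ⟨b, hb1, hb2, hb3, hb4⟩ : ∃ b : Fin r × Fin n, (b.1 : ℕ) ≠ 1 ∧
      b ≠ (⟨0, by omega⟩, ⟨0, by omega⟩) ∧ b ≠ (⟨0, by omega⟩, ⟨1, by omega⟩) ∧
      b ≠ (⟨1, by omega⟩, ⟨0, by omega⟩) := by
    rcases hnr with h | h
    · exact ⟨(⟨0, by omega⟩, ⟨2, by omega⟩), by simp, by simp, by simp, by simp⟩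
    · exact ⟨(⟨2, by omega⟩, ⟨0, by omega⟩), by simp, by simp, by simp, by simp⟩
  obtain ⟨e, he⟩ := exists_equiv_extend (α := Fin d) (β := Fin r × Fin n) (by simp [hd])
    ![x, y, σ x, σ y] ![(⟨0, by omega⟩, ⟨0, by omega⟩), (⟨0, by omega⟩, ⟨1, by omega⟩),
      (⟨1, by omega⟩, ⟨0, by omega⟩), b]
    (by
      intro i j
      fin_cases i <;> fin_cases j <;>
        simp [hyx, Ne.symm hyx, hx, Ne.symm hx, hyσ, Ne.symm hyσ, h3, Ne.symm h3, h4, Ne.symm h4])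
    (by
      intro i j
      fin_cases i <;> fin_cases j <;>
        simp [hb2, hb3, hb4, Ne.symm hb2, Ne.symm hb3, Ne.symm hb4])
  have e0 := he 0
  have e1 := he 1
  have e2 := he 2
  have e3 := he 3
  simp only [Matrix.cons_val] at e0 e1 e2 e3
  have h := block_of_scalar e hζ hσ (Ne.symm hyx) (by rw [e0, e1])
  rw [e2, e3] at h
  exact hb1 (congrArg Fin.val h).symm

/-- The Klein four-group: the identity and the three fixed-point-free involutions. -/
def kleinFour : Finset (Equiv.Perm (Fin 4)) :=
  Finset.univ.filter fun σ => (∀ x, σ (σ x) = x) ∧ (σ = 1 ∨ ∀ x, σ x ≠ x)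

lemma card_kleinFour : kleinFour.card = 4 := by decide +kernel

lemma exists_split_of_notMem_kleinFour : ∀ σ : Equiv.Perm (Fin 4), σ ∉ kleinFour →
    ∃ x y, x ≠ y ∧ σ x ≠ x ∧ σ x ≠ y ∧ (σ y = x ∨ σ y = y) := by decide +kernel

/-- On balanced words in two letters, an element of the Klein four-group acts trivially or by
exchanging the letters. -/
lemma kleinFour_word : ∀ σ ∈ kleinFour, ∀ w : Fin 4 → Fin 2,
    (∑ t, if w t = 1 then 1 else 0) = 2 → w ∘ σ = w ∨ w ∘ σ = fun t => 1 - w t := by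
  decide +kernel

/-- Invariants in `(ℂ²)^{⊗4}` are unchanged when the two letters are exchanged: apply the Weyl
element `!![0, 1; -1, 0]`. -/
lemma slInv_compl {f : (Fin 4 → Fin 2) → ℂ} (hf : f ∈ slInv 2 4) {w : Fin 4 → Fin 2}
    (hw : sc w 0 1 = 2) : f (fun t => 1 - w t) = f w := by
  have h := congrFun (hf ⟨!![0, 1; -1, 0], by simp [Matrix.det_fin_two]⟩) w
  rw [← h]
  simp only [glMat, tmat, Matrix.mulVec, dotProduct, Matrix.of_apply]
  rw [Finset.sum_eq_single fun t => 1 - w t]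
  · have h1 : ∀ t, (!![0, 1; -1, 0] : Matrix (Fin 2) (Fin 2) ℂ) (w t) (1 - w t) =
        (-1) ^ (if w t = 1 then 1 else 0) := by
      intro t
      generalize w t = a
      fin_cases a <;> simp
    have h2 : ∏ t, (!![0, 1; -1, 0] : Matrix (Fin 2) (Fin 2) ℂ) (w t) (1 - w t) = 1 := by
      rw [Finset.prod_congr rfl fun t _ => h1 t, Finset.prod_pow_eq_pow_sum]
      simp only [sc, Nat.zero_le, true_and] at hw
      rw [hw]
      norm_num
    exact ((congrArg (· * f fun t => 1 - w t) h2).trans (one_mul _)).symm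
  · intro q _ hq
    obtain ⟨t, ht⟩ := Function.ne_iff.mp hq
    refine mul_eq_zero_of_left (Finset.prod_eq_zero (Finset.mem_univ t) ?_) _
    generalize w t = a at ht ⊢
    generalize q t = b at ht ⊢
    fin_cases a <;> fin_cases b <;> simp at ht ⊢
  · intro h; exact absurd (Finset.mem_univ _) h

lemma sc_one_of_ne_zero {f : (Fin 4 → Fin 2) → ℂ} (hf : f ∈ slInv 2 4) {w : Fin 4 → Fin 2}
    (hw : f w ≠ 0) : sc w 0 1 = 2 := by
  have h1 := sum_sc w
  have h2 := sc_eq_of_slInv hf hw 0 1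
  rw [Fin.sum_univ_two] at h1
  omega

lemma sc_comp_perm {n d : ℕ} (σ : Equiv.Perm (Fin d)) (w : Fin d → Fin n) (i : Fin n) :
    sc (w ∘ σ) 0 i = sc w 0 i := by
  simp only [sc, Nat.zero_le, true_and]
  exact Equiv.sum_comp σ fun t => if w t = i then 1 else 0

lemma kleinFour_trivial {σ : Equiv.Perm (Fin 4)} (hσ : σ ∈ kleinFour)
    {f : (Fin 4 → Fin 2) → ℂ} (hf : f ∈ slInv 2 4) : (permMat 2 σ).mulVec f = f := by
  funext w
  rw [permMat_mulVec]
  by_cases hw : sc w 0 1 = 2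
  · have h : (∑ t, if w t = 1 then 1 else 0) = 2 := by
      simpa only [sc, Nat.zero_le, true_and] using hw
    rcases kleinFour_word σ hσ w h with h' | h'
    · rw [h']
    · rw [h', slInv_compl hf hw]
  · have h1 : f w = 0 := by
      by_contra h
      exact hw (sc_one_of_ne_zero hf h)
    have h2 : f (w ∘ σ) = 0 := by
      by_contra h
      exact hw (sc_comp_perm σ w 1 ▸ sc_one_of_ne_zero hf h)
    rw [h1, h2]

/-! ### The limit -/

/-- In the limit only the permutations acting trivially on `slInv n d` contribute to the character
sum computing `finrank (invPolySpace n k d) * d!`. -/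
lemma tendsto_of_kernel {n d : ℕ} (K : Finset (Equiv.Perm (Fin d)))
    (hK1 : ∀ σ ∈ K, ∀ f ∈ slInv n d, (permMat n σ).mulVec f = f)
    (hK2 : ∀ σ ∉ K, ∀ ζ : ℂ, ζ ≠ 0 → (∀ f ∈ slInv n d, (permMat n σ).mulVec f = ζ • f) → False)
    (p : ℝ) (hp : (Module.finrank ℂ (slInv n d) : ℝ) = p) (hpos : 0 < p) :
    Filter.Tendsto
      (fun k : ℕ =>
        (Module.finrank ℂ (invPolySpace n k d) : ℝ) * (Nat.factorial d : ℝ) / p ^ k)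
      Filter.atTop (nhds (K.card : ℝ)) := by
  obtain ⟨P, h0, h1, h2⟩ := exists_orthProj (slInv n d)
  have hfr : 0 < Module.finrank ℂ (slInv n d) := by
    rw [← hp] at hpos
    exact_mod_cast hpos
  have hpC : (p : ℂ) ≠ 0 := by exact_mod_cast hpos.ne'
  have hlim : ∀ σ : Equiv.Perm (Fin d), Filter.Tendsto
      (fun k : ℕ => ((permMat n σ * P).trace / (p : ℂ)) ^ k) Filter.atTop
      (nhds (if σ ∈ K then 1 else 0)) := by
    intro σ
    split_ifs with hσ
    · have e : permMat n σ * P = P := matrix_ext_mulVec fun x => by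
        rw [← Matrix.mulVec_mulVec, hK1 σ hσ _ (h1 x)]
      rw [e, trace_eq_finrank_of_proj _ P h1 h2, ← hp]
      rw [← hp] at hpC
      push_cast at hpC ⊢
      rw [div_self hpC]
      simp
    · refine tendsto_pow_atTop_nhds_zero_of_norm_lt_one ?_
      rcases trace_lt_or_scalar P h0 h1 h2 hfr σ with h | ⟨ζ, hζ, h⟩
      · rw [norm_div, Complex.norm_real, Real.norm_of_nonneg hpos.le, div_lt_one hpos, ← hp]
        exact h
      · exact (hK2 σ hσ ζ hζ h).elim
  have hsum := tendsto_finsetSum Finset.univ fun σ _ => hlim σ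
  have hre := (Complex.continuous_re.tendsto _).comp hsum
  have hcard : (∑ σ, if σ ∈ K then (1 : ℂ) else 0).re = K.card := by simp
  rw [hcard] at hre
  refine hre.congr fun k => ?_
  have h3 := finrank_invTensors P h1 h2 k
  rw [← finrank_invPolySpace] at h3
  simp only [Function.comp_apply, div_pow]
  rw [← Finset.sum_div, ← h3]
  have h4 : (Module.finrank ℂ (invPolySpace n k d) : ℂ) * (Nat.factorial d : ℂ) / (p : ℂ) ^ k =
      (((Module.finrank ℂ (invPolySpace n k d) : ℝ) * (Nat.factorial d : ℝ) / p ^ k : ℝ) : ℂ) := by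
    push_cast
    rfl
  rw [h4, Complex.ofReal_re]

/-- Asymptotics: with `d = rn` (`r ≥ 2`) and `p = d!·∏_{m<n} m!/(m+r)!`, the dimension
`a_k` of the space of `G`-invariant homogeneous degree-`d` polynomial functions on
`(ℂ^n)^{⊗k}` satisfies `a_k · d!/p^k → c` as `k → ∞`, where `c = 4` if `n = 2, d = 4`
and `c = 1` otherwise. -/
theorem stmt11 (n r d : ℕ) (hn : 2 ≤ n) (hr : 2 ≤ r) (hd : d = r * n)
    (p : ℝ) (hp : p = (Nat.factorial d : ℝ) *
      ∏ m ∈ Finset.range n, (Nat.factorial m : ℝ) / (Nat.factorial (m + r) : ℝ))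
    (c : ℝ) (hc : c = if n = 2 ∧ d = 4 then 4 else 1) :
    Filter.Tendsto
      (fun k : ℕ =>
        (Module.finrank ℂ (invPolySpace n k d) : ℝ) * (Nat.factorial d : ℝ) / p ^ k)
      Filter.atTop (nhds c) := by
  have hpos : 0 < p := by
    rw [hp]
    positivity
  have hfin : (Module.finrank ℂ (slInv n d) : ℝ) = p := (finrank_slInv hd).trans hp.symm
  by_cases h : n = 2 ∧ d = 4
  · obtain ⟨rfl, rfl⟩ := h
    have hr2 : r = 2 := by omega
    subst hr2
    have := tendsto_of_kernel kleinFour (fun σ hσ f hf => kleinFour_trivial hσ hf)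
      (fun σ hσ ζ hζ hs => by
        obtain ⟨x, y, hxy, h1, h2, h3⟩ := exists_split_of_notMem_kleinFour σ hσ
        exact not_scalar_of_split le_rfl le_rfl rfl hxy h1 h2 h3 hζ hs) p hfin hpos
    rw [card_kleinFour] at this
    rw [hc]
    simpa using this
  · have hnr : 3 ≤ n ∨ 3 ≤ r := by
      by_contra hlt
      obtain ⟨rfl, rfl⟩ : n = 2 ∧ r = 2 := by omega
      exact h ⟨rfl, hd⟩
    have := tendsto_of_kernel {(1 : Equiv.Perm (Fin d))}
      (fun σ hσ f _ => by rw [Finset.mem_singleton.mp hσ, permMat_one, Matrix.one_mulVec])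
      (fun σ hσ ζ hζ hs => hσ (Finset.mem_singleton.mpr
        (eq_one_of_scalar hn hr hd hnr hζ hs))) p hfin hpos
    rw [hc, if_neg h]
    simpa using this
end
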